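/- arXiv:2303.13185 — 2 statements merged into one kernel-verified Lean document; each statement's English description precedes it below -/
import Mathlib

section
/- There exists a constant c such that for every natural number n, every binary string x of length n, and every finite nonempty set S of binary strings with x ∈ S, C(S) ≤ n, and |S| ≤ 2^n, there exists a finite nonempty set S' of binary strings with x ∈ S', C(S') ≤ C(S) + c·log(n+2), and δ(x|S') ≤ d(x|S) + c·log(n+2). (Vereshchagin–Vitányi: every good statistical model in the randomness-deficiency sense can be converted into one of essentially the same complexity that is good in the optimality-deficiency sense.) -/
open scoped Classical

/-- Binary strings: finite sequences over `{0,1}`. -/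
abbrev BStr := List Bool

/-- Complexity of `x` with respect to the description method `D`:
the minimal length of a `p` with `D(p) = x`, as an extended natural
(`⊤` if no such `p` exists). -/
noncomputable def Cw (D : BStr →. BStr) (x : BStr) : ℕ∞ :=
  ⨅ (p : BStr) (_ : x ∈ D p), (p.length : ℕ∞)

/-- A description method is optimal if it is partial computable and gives
complexity at most that of any other partial computable description method,
up to an additive constant. -/
def OptimalDM (D : BStr →. BStr) : Prop :=
  Partrec D ∧ ∀ D' : BStr →. BStr, Partrec D' →
    ∃ c : ℕ, ∀ x : BStr, Cw D x ≤ Cw D' x + (c : ℕ∞)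

/-- Plain Kolmogorov complexity (finite value) w.r.t. a description method. -/
noncomputable def C (D : BStr →. BStr) (x : BStr) : ℕ := (Cw D x).toNat

/-- Conditional complexity of `x` given `y` w.r.t. the conditional
description method `E`. -/
noncomputable def CwCond (E : BStr → BStr →. BStr) (x y : BStr) : ℕ∞ :=
  ⨅ (p : BStr) (_ : x ∈ E p y), (p.length : ℕ∞)

/-- Optimal conditional description method. -/
def OptimalCDM (E : BStr → BStr →. BStr) : Prop :=
  Partrec₂ E ∧ ∀ E' : BStr → BStr →. BStr, Partrec₂ E' →
    ∃ c : ℕ, ∀ x y : BStr, CwCond E x y ≤ CwCond E' x y + (c : ℕ∞)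

/-- Conditional Kolmogorov complexity (finite value). -/
noncomputable def Ccond (E : BStr → BStr →. BStr) (x y : BStr) : ℕ :=
  (CwCond E x y).toNat

/-- `enc` is a computable injective encoding of finite sets of binary strings
as binary strings (computability is expressed on the level of lists of
elements, since every finite set is the set of members of a list). -/
def SetEncoding (enc : Finset BStr → BStr) : Prop :=
  Function.Injective enc ∧ Computable (fun l : List BStr => enc l.toFinset)

/-- A computable step-counting semantics for the description method `D`:
`ev t p` is the output of `D` on program `p` within `t` computation steps
(`none` if the computation has not converged within `t` steps). -/
structure TimedDM (D : BStr →. BStr) where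
  ev : ℕ → BStr → Option BStr
  computable : Computable₂ ev
  mono : ∀ {t t' : ℕ} {p y : BStr}, t ≤ t' → ev t p = some y → ev t' p = some y
  spec : ∀ p y : BStr, y ∈ D p ↔ ∃ t : ℕ, ev t p = some y

/-- Time-bounded complexity `C^t(x)`: the minimal length of a program
producing `x` within `t` steps (`⊤` if there is none). -/
noncomputable def Cwt (ev : ℕ → BStr → Option BStr) (t : ℕ) (x : BStr) : ℕ∞ :=
  ⨅ (p : BStr) (_ : ev t p = some x), (p.length : ℕ∞)

/-- `B D k`: the largest natural number whose binary representation has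
complexity at most `k` (naturals are identified with their binary
representations via `Nat.bits`). -/
noncomputable def B (D : BStr →. BStr) (k : ℕ) : ℕ :=
  sSup {m : ℕ | Cw D (Nat.bits m) ≤ (k : ℕ∞)}

/-- Kolmogorov's `(α,β)`-stochasticity: `x` belongs to a finite set `S` of
complexity at most `α` in which it is random up to `β`. -/
def Stochastic (D : BStr →. BStr) (enc : Finset BStr → BStr)
    (α β : ℕ) (x : BStr) : Prop :=
  ∃ S : Finset BStr, x ∈ S ∧ C D (enc S) ≤ α ∧
    Real.logb 2 S.card - β ≤ (C D x : ℝ)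

/-- The binary entropy function (with the convention `H(0) = H(1) = 0`,
which holds automatically since `logb 2 0 = 0` in Mathlib). -/
noncomputable def binH (p : ℝ) : ℝ :=
  -(p * Real.logb 2 p) - (1 - p) * Real.logb 2 (1 - p)

/-!
All inequalities below hold up to `O(log n)`. Let `m = C(S)`, let `2 ^ l` bound `|S|`, and enumerate
the sets of size at most `2 ^ l` given by programs of length `m`; there are at most `2 ^ m` of them.
Say that `x` belongs to about `2 ^ k` of these sets.

If `k` is large, a better model exists: at most `2 ^ (m + l - k)` strings belong to `2 ^ k` of the
sets or more, and cutting the enumeration of these strings into blocks of size `2 ^ (l - k)` gives a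
set `S'` that contains `x`, has complexity at most `m`, and is smaller than `S` by the factor
`2 ^ k`. Hence `C(S') + log |S'| ≤ m + l - k`.

If `k` is small, `x` is already fairly random in `S`: given `x`, the set `S` is one of about `2 ^ k`
enumerated sets, so that `C(S | x) ≤ k`, and symmetry of information yields
`m + C(x | S) ≤ C(x) + k`.

Adding the two bounds cancels `k` and leaves `δ(x | S') ≤ l - C(x | S)`, which is `d(x | S)`.
-/

section BinaryCodes

/-- The natural number whose binary digits, least significant first, are `u`. This is the left
inverse of `Nat.bits`; trailing zeros are allowed. -/
def ofBits (u : BStr) : ℕ := u.foldr Nat.bit 0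

theorem ofBits_bits (n : ℕ) : ofBits n.bits = n := by
  induction n using Nat.binaryRec' with
  | zero => simp [ofBits]
  | bit b n h ih => rw [Nat.bits_append_bit _ _ h, ofBits, List.foldr_cons, ← ofBits, ih]

theorem primrec₂_bit : Primrec₂ Nat.bit := by
  refine (Primrec.cond Primrec.fst (Primrec.nat_double_succ.comp Primrec.snd)
    (Primrec.nat_double.comp Primrec.snd)).of_eq ?_
  rintro ⟨_ | _, n⟩ <;> rfl

theorem primrec_ofBits : Primrec ofBits := by
  refine Primrec.list_foldr (h := fun (_ : BStr) (q : Bool × ℕ) => Nat.bit q.1 q.2) Primrec.id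
    (Primrec.const 0) ?_
  exact primrec₂_bit.comp (Primrec.fst.comp Primrec.snd) (Primrec.snd.comp Primrec.snd)

theorem primrec_two_pow : Primrec fun n : ℕ => 2 ^ n :=
  (Primrec₂.unpaired'.1 Nat.Primrec.pow).comp (Primrec.const 2) Primrec.id

theorem length_bits_le_of_lt {i M : ℕ} (h : i < 2 ^ M) : i.bits.length ≤ M := by
  rw [Nat.size_eq_bits_len]
  exact Nat.size_le.2 h

variable {α β : Type*} [Primcodable α] [Primcodable β]

/-- The number of binary digits of the code of `a`. It measures the cost of passing `a` to a
description method as a side parameter. -/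
def codeLength (a : α) : ℕ := (Encodable.encode a).size

theorem codeLength_prod_le (a : α) (b : β) :
    codeLength (a, b) ≤ 2 * (codeLength a + codeLength b) := by
  rw [codeLength, Encodable.encode_prod_val]
  refine Nat.size_le.2 ((Nat.pair_lt_max_add_one_sq _ _).trans_le ?_)
  rw [mul_comm, pow_mul]
  refine Nat.pow_le_pow_left ?_ 2
  have ha : Encodable.encode a < 2 ^ codeLength a := Nat.lt_size_self _
  have hb : Encodable.encode b < 2 ^ codeLength b := Nat.lt_size_self _
  have ha' := Nat.pow_le_pow_right two_pos (Nat.le_add_right (codeLength a) (codeLength b))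
  have hb' := Nat.pow_le_pow_right two_pos (Nat.le_add_left (codeLength b) (codeLength a))
  omega

/-- The string `1 ... 1 0 ⟨a⟩ u`, where `⟨a⟩` is the binary code of `a` and the initial block of
ones has the length of `⟨a⟩`, so that both `a` and `u` can be recovered. -/
def withParam (a : α) (u : BStr) : BStr :=
  List.replicate (codeLength a) true ++ false :: ((Encodable.encode a).bits ++ u)

/-- The decoder of `withParam`. -/
def splitParam (α : Type*) [Primcodable α] (p : BStr) : Option (α × BStr) :=
  let ones := p.findIdx (! ·)
  let rest := p.drop (ones + 1)
  (Encodable.decode (ofBits (rest.take ones))).map (·, rest.drop ones)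

theorem length_withParam (a : α) (u : BStr) :
    (withParam a u).length = u.length + 2 * codeLength a + 1 := by
  simp only [withParam, codeLength, List.length_append, List.length_replicate, List.length_cons,
    Nat.size_eq_bits_len]
  ring

theorem findIdx_not_replicate_true_append (k : ℕ) (v : BStr) :
    (List.replicate k true ++ false :: v).findIdx (! ·) = k := by
  induction k with
  | zero => simp [List.findIdx_cons]
  | succ k ih => simp [List.replicate_succ, List.findIdx_cons, ih]

theorem splitParam_withParam (a : α) (u : BStr) : splitParam α (withParam a u) = some (a, u) := by
  have hones : (withParam a u).findIdx (! ·) = codeLength a :=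
    findIdx_not_replicate_true_append _ _
  have hrest : (withParam a u).drop (codeLength a + 1) = (Encodable.encode a).bits ++ u := by
    rw [withParam, List.drop_append]
    simp
  have hlength : (Encodable.encode a).bits.length = codeLength a := Nat.size_eq_bits_len _
  simp only [splitParam, hones, hrest]
  rw [List.take_left' hlength, List.drop_left' hlength, ofBits_bits, Encodable.encodek]
  rfl

theorem computable_splitParam : Computable (splitParam α) := by
  have hones : Primrec fun p : BStr => p.findIdx (! ·) :=
    Primrec.list_findIdx Primrec.id (Primrec.not.comp Primrec.snd)
  have hrest : Primrec fun p : BStr => p.drop (p.findIdx (! ·) + 1) :=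
    Primrec.list_drop.comp (Primrec.succ.comp hones) Primrec.id
  exact Computable.option_map
    (Computable.decode.comp (primrec_ofBits.comp (Primrec.list_take.comp hones hrest)).to_comp)
    (Computable.snd.pair ((Primrec.list_drop.comp hones hrest).to_comp.comp Computable.fst))

end BinaryCodes

section Complexity

variable {α : Type*} [Primcodable α] {D : BStr →. BStr} {E : BStr → BStr →. BStr}

theorem OptimalDM.exists_C_le_length_add (hD : OptimalDM D) {D' : BStr →. BStr}
    (hD' : Partrec D') : ∃ c : ℕ, ∀ p x, x ∈ D' p → C D x ≤ p.length + c := by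
  obtain ⟨c, hc⟩ := hD.2 D' hD'
  refine ⟨c, fun p x hx => ENat.toNat_le_of_le_natCast ((hc x).trans ?_)⟩
  rw [Nat.cast_add]
  gcongr
  exact iInf₂_le p hx

theorem OptimalCDM.exists_Ccond_le_length_add (hE : OptimalCDM E) {E' : BStr → BStr →. BStr}
    (hE' : Partrec₂ E') : ∃ c : ℕ, ∀ p x y, x ∈ E' p y → Ccond E x y ≤ p.length + c := by
  obtain ⟨c, hc⟩ := hE.2 E' hE'
  refine ⟨c, fun p x y hx => ENat.toNat_le_of_le_natCast ((hc x y).trans ?_)⟩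
  rw [Nat.cast_add]
  gcongr
  exact iInf₂_le (f := fun (p : BStr) (_ : x ∈ E' p y) => (p.length : ℕ∞)) p hx

theorem OptimalDM.exists_shortest_program (hD : OptimalDM D) (x : BStr) :
    ∃ p : BStr, x ∈ D p ∧ p.length = C D x := by
  obtain ⟨c, hc⟩ := hD.2 (fun p => Part.some p) Partrec.some
  have hfinite : Cw D x < ⊤ := calc
    Cw D x ≤ Cw (fun p => Part.some p) x + c := hc x
    _ ≤ x.length + c := by
      gcongr
      exact iInf₂_le (f := fun (p : BStr) (_ : x ∈ Part.some p) => (p.length : ℕ∞)) x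
        (Part.mem_some x)
    _ < ⊤ := by exact_mod_cast ENat.natCast_lt_top (x.length + c)
  obtain ⟨p₀, hp₀, -⟩ : ∃ p, ∃ _ : x ∈ D p, (p.length : ℕ∞) < ⊤ := by
    simpa only [Cw, iInf_lt_iff] using hfinite
  have : Nonempty {p // x ∈ D p} := ⟨⟨p₀, hp₀⟩⟩
  obtain ⟨p, hp⟩ := ENat.exists_eq_iInf fun p : {p // x ∈ D p} => (p.1.length : ℕ∞)
  refine ⟨p, p.2, ?_⟩
  rw [C, Cw, iInf_subtype', ← hp, ENat.toNat_natCast]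

theorem OptimalDM.exists_C_le_length_add_codeLength (hD : OptimalDM D) {F : α → BStr →. BStr}
    (hF : Partrec₂ F) :
    ∃ c : ℕ, ∀ a u x, x ∈ F a u → C D x ≤ u.length + 2 * codeLength a + c := by
  obtain ⟨c, hc⟩ := hD.exists_C_le_length_add
    (D' := fun p => (splitParam α p : Part (α × BStr)).bind fun q => F q.1 q.2)
    (computable_splitParam.ofOption.bind (hF.comp (Computable.fst.comp Computable.snd)
      (Computable.snd.comp Computable.snd)))
  refine ⟨c + 1, fun a u x hx => ?_⟩
  have h := hc (withParam a u) x (by simpa [splitParam_withParam] using hx)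
  rw [length_withParam] at h
  omega

theorem OptimalCDM.exists_Ccond_le_length_add_codeLength (hE : OptimalCDM E)
    {F : α × BStr → BStr →. BStr} (hF : Partrec₂ F) :
    ∃ c : ℕ, ∀ a u x y, x ∈ F (a, u) y → Ccond E x y ≤ u.length + 2 * codeLength a + c := by
  obtain ⟨c, hc⟩ := hE.exists_Ccond_le_length_add
    (E' := fun p y => (splitParam α p : Part (α × BStr)).bind fun q => F q y)
    ((computable_splitParam.ofOption.comp Computable.fst).bind
      (hF.comp Computable.snd (Computable.snd.comp Computable.fst)))
  refine ⟨c + 1, fun a u x y hx => ?_⟩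
  have h := hc (withParam a u) x y (by simpa [splitParam_withParam] using hx)
  rw [length_withParam] at h
  omega

end Complexity

section HeavyElements

variable {β : Type*}

theorem length_le_of_nodup_of_forall_mem {f : BStr →. β} {l : List β} {w : ℕ} (hl : l.Nodup)
    (h : ∀ b ∈ l, ∃ r : BStr, r.length = w ∧ b ∈ f r) : l.length ≤ 2 ^ w := by
  choose! r hr hmem using h
  calc l.length = l.toFinset.card := (List.toFinset_card_of_nodup hl).symm
    _ ≤ ((Finset.univ : Finset (List.Vector Bool w)).image List.Vector.toList).card := by
        refine Finset.card_le_card_of_injOn r ?_ ?_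
        · intro b hb
          have hb' := List.mem_toFinset.1 hb
          exact Finset.mem_coe.2 (Finset.mem_image.2 ⟨⟨r b, hr b hb'⟩, Finset.mem_univ _, rfl⟩)
        · intro b hb b' hb' heq
          have hb₁ := hmem b (List.mem_toFinset.1 hb)
          have hb₂ := hmem b' (List.mem_toFinset.1 hb')
          exact Part.mem_unique (heq ▸ hb₁) hb₂
    _ ≤ 2 ^ w := Finset.card_image_le.trans_eq (by simp [card_vector])

theorem range_prefix_range {m n : ℕ} (h : m ≤ n) : List.range m <+: List.range n := by
  rw [← Nat.add_sub_cancel' h, List.range_add]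
  exact List.prefix_append _ _

theorem inits_eq_map_take (l : List β) : l.inits = (List.range (l.length + 1)).map l.take := by
  refine List.ext_getElem (by simp) fun i hi _ => ?_
  simp

theorem prefix_inits_of_prefix {l l' : List β} (h : l <+: l') : l.inits <+: l'.inits := by
  obtain ⟨v, rfl⟩ := h
  rw [List.inits_append]
  exact List.prefix_append _ _

theorem primrec_inits [Primcodable β] : Primrec (List.inits : List β → List (List β)) :=
  (Primrec.list_map (Primrec.list_range.comp (Primrec.succ.comp Primrec.list_length))
    (Primrec.list_take.comp Primrec.snd Primrec.fst).to₂).of_eq fun l => (inits_eq_map_take l).symm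

variable [BEq β]

/-- The elements of `l` that occur at least `h` times, in the order in which they reach their `h`-th
occurrence. With this order, lengthening `l` only lengthens the list. -/
def heavy (h : ℕ) (l : List β) : List β :=
  l.inits.filterMap fun p => p.getLast?.bind fun y => if p.count y = h then some y else none

theorem heavy_nil (h : ℕ) : heavy h ([] : List β) = [] := rfl

theorem heavy_prefix_of_prefix (h : ℕ) {l l' : List β} (hl : l <+: l') :
    heavy h l <+: heavy h l' :=
  (prefix_inits_of_prefix hl).filterMap _

variable [LawfulBEq β]

theorem heavy_concat (h : ℕ) (l : List β) (y : β) :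
    heavy h (l ++ [y]) = heavy h l ++ if l.count y + 1 = h then [y] else [] := by
  rw [heavy, List.inits_append, List.filterMap_append, ← heavy]
  congr 1
  split_ifs with hy <;> simp [List.inits, hy]

theorem mem_heavy {h : ℕ} (hh : 0 < h) {l : List β} {y : β} :
    y ∈ heavy h l ↔ h ≤ l.count y := by
  induction l using List.reverseRecOn with
  | nil => simp only [heavy_nil, List.not_mem_nil, List.count_nil, false_iff, not_le, hh]
  | append_singleton l z ih =>
    rw [heavy_concat, List.mem_append, ih, List.count_append]
    by_cases hzy : z = y
    · subst hzy
      split_ifs <;> simp <;> omega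
    · have hcount : [z].count y = 0 := List.count_eq_zero.2 (by simpa using Ne.symm hzy)
      split_ifs <;> simp [hcount, Ne.symm hzy]

theorem mem_heavy_one {l : List β} {y : β} : y ∈ heavy 1 l ↔ y ∈ l := by
  rw [mem_heavy one_pos, Nat.one_le_iff_ne_zero, ← Nat.pos_iff_ne_zero, List.count_pos_iff]

theorem nodup_heavy {h : ℕ} (hh : 0 < h) (l : List β) : (heavy h l).Nodup := by
  induction l using List.reverseRecOn with
  | nil => simp [heavy_nil]
  | append_singleton l z ih =>
    rw [heavy_concat]
    split_ifs with hz
    · refine ih.append (List.nodup_singleton z) ?_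
      rw [List.disjoint_singleton, mem_heavy hh]
      omega
    · simpa using ih

theorem length_heavy_mul_le {h : ℕ} (hh : 0 < h) (l : List β) :
    (heavy h l).length * h ≤ l.length := by
  obtain rfl : ‹BEq β› = instBEqOfDecidableEq := lawful_beq_subsingleton _ _
  rw [← List.toFinset_card_of_nodup (nodup_heavy hh l), ← smul_eq_mul]
  calc (heavy h l).toFinset.card • h ≤ ∑ y ∈ (heavy h l).toFinset, l.count y :=
        Finset.card_nsmul_le_sum _ _ _ fun y hy => (mem_heavy hh).1 (List.mem_toFinset.1 hy)
    _ ≤ ∑ y ∈ l.toFinset, l.count y := by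
        refine Finset.sum_le_sum_of_subset fun y hy => ?_
        have hcount := (mem_heavy hh).1 (List.mem_toFinset.1 hy)
        exact List.mem_toFinset.2 (List.count_pos_iff.1 (hh.trans_le hcount))
    _ = l.length := List.sum_toFinset_count_eq_length l

theorem primrec₂_count [Primcodable β] : Primrec₂ fun (l : List β) y => l.count y := by
  refine (Primrec.list_length.comp
    ((PrimrecRel.listFilter (Primrec.eq (α := β))).comp Primrec.fst Primrec.snd)).of_eq ?_
  rintro ⟨l, y⟩
  simp [List.count_eq_length_filter, beq_eq_decide]

theorem primrec₂_heavy [Primcodable β] : Primrec₂ (heavy : ℕ → List β → List β) := by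
  have hlast : Primrec fun p : List β => p.getLast? :=
    (Primrec.list_head?.comp Primrec.list_reverse).of_eq fun p => by simp
  have hcount : PrimrecRel fun (q : (ℕ × List β) × List β) (y : β) => q.2.count y = q.1.1 :=
    Primrec.eq.comp (primrec₂_count.comp (Primrec.snd.comp Primrec.fst) Primrec.snd)
      (Primrec.fst.comp (Primrec.fst.comp Primrec.fst))
  exact Primrec.listFilterMap (primrec_inits.comp Primrec.snd)
    (Primrec.option_bind (hlast.comp Primrec.snd)
      (Primrec.ite hcount (Primrec.option_some.comp Primrec.snd) (Primrec.const none)))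

end HeavyElements

section Enumerations

variable {α β γ : Type*} [Primcodable α] [Primcodable β] [Primcodable γ]

/-- A uniformly computable family of list-valued processes that only ever append new elements:
`L a t` is what the process with parameter `a` has listed by time `t`. -/
structure IsEnumeration (L : α → ℕ → List β) : Prop where
  computable : Computable₂ L
  prefix_of_le : ∀ a ⦃s t : ℕ⦄, s ≤ t → L a s <+: L a t

namespace IsEnumeration

variable {L : α → ℕ → List β}

theorem comp_param (hL : IsEnumeration L) {f : γ → α} (hf : Computable f) :
    IsEnumeration fun c => L (f c) where
  computable := hL.computable.comp (hf.comp Computable.fst) Computable.snd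
  prefix_of_le c := hL.prefix_of_le (f c)

theorem postcomp (hL : IsEnumeration L) {g : α → List β → List γ} (hg : Computable₂ g)
    (hmono : ∀ a ⦃l l'⦄, l <+: l' → g a l <+: g a l') :
    IsEnumeration fun a t => g a (L a t) where
  computable := hg.comp Computable.fst hL.computable
  prefix_of_le a _ _ h := hmono a (hL.prefix_of_le a h)

theorem map (hL : IsEnumeration L) {f : α → β → γ} (hf : Primrec₂ f) :
    IsEnumeration fun a t => (L a t).map (f a) :=
  hL.postcomp (g := fun a l => l.map (f a))
    (Primrec.list_map Primrec.snd
      (hf.comp (Primrec.fst.comp Primrec.fst) Primrec.snd).to₂).to_comp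
    fun _ _ _ h => h.map _

theorem mem_rfindOpt_getElem? (hL : IsEnumeration L) {a : α} {t i : ℕ} (hi : i < (L a t).length) :
    (L a t)[i] ∈ Nat.rfindOpt fun s => (L a s)[i]? := by
  refine (Nat.rfindOpt_mono fun {b m n} hmn hb => ?_).2 ⟨t, by simp [hi]⟩
  obtain ⟨h, rfl⟩ := List.getElem?_eq_some_iff.1 (Option.mem_def.1 hb)
  rw [Option.mem_def, List.getElem?_eq_some_iff]
  exact ⟨_, ((hL.prefix_of_le a hmn).getElem h).symm⟩

theorem exists_bits_mem_rfindOpt (hL : IsEnumeration L) {a : α} {t M : ℕ} {b : β}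
    (hb : b ∈ L a t) (hM : (L a t).length ≤ 2 ^ M) :
    ∃ u : BStr, u.length ≤ M ∧ b ∈ Nat.rfindOpt fun s => (L a s)[ofBits u]? := by
  obtain ⟨i, hi, rfl⟩ := List.getElem_of_mem hb
  refine ⟨i.bits, length_bits_le_of_lt (hi.trans_le hM), ?_⟩
  rw [ofBits_bits]
  exact hL.mem_rfindOpt_getElem? hi

theorem partrec₂_rfindOpt (hL : IsEnumeration L) :
    Partrec₂ fun a (u : BStr) => Nat.rfindOpt fun t => (L a t)[ofBits u]? :=
  Partrec.rfindOpt (Computable.list_getElem?.comp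
    (hL.computable.comp (Computable.fst.comp Computable.fst) Computable.snd)
    (primrec_ofBits.to_comp.comp (Computable.snd.comp Computable.fst)))

end IsEnumeration

theorem isEnumeration_filterMap_range {e : α → ℕ → Option β} (he : Computable₂ e) :
    IsEnumeration fun a t => (List.range t).filterMap (e a) where
  computable := by
    have hstep : Computable₂ fun (q : α × ℕ) (s : ℕ × List β) => s.2 ++ (e q.1 s.1).toList :=
      Computable.list_append.comp (Computable.snd.comp Computable.snd)
        (Primrec.optionToList.to_comp.comp (he.comp (Computable.fst.comp Computable.fst)
          (Computable.fst.comp Computable.snd)))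
    refine (Computable.nat_rec Computable.snd (Computable.const []) hstep).of_eq ?_
    rintro ⟨a, t⟩
    induction t with
    | zero => rfl
    | succ t ih =>
      simp only at ih
      simp only [ih, List.range_succ, List.filterMap_append]
      cases h : e a t <;> simp [h]
  prefix_of_le a _ _ h := (range_prefix_range h).filterMap _

theorem exists_computable_stages {f : α →. β} (hf : Partrec f) :
    ∃ e : α → ℕ → Option β, Computable₂ e ∧ ∀ a b, b ∈ f a ↔ ∃ t, e a t = some b := by
  obtain ⟨c, hc⟩ := Nat.Partrec.Code.exists_code.1 hf
  refine ⟨fun a t => (c.evaln t (Encodable.encode a)).bind (Encodable.decode (α := β)), ?_, ?_⟩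
  · exact Computable.option_bind
      (Nat.Partrec.Code.primrec_evaln.to_comp.comp ((Computable.snd.pair (Computable.const c)).pair
        (Computable.encode.comp Computable.fst)))
      (Computable.decode.comp Computable.snd)
  · intro a b
    have heval (n : ℕ) :
        (∃ t, n ∈ c.evaln t (Encodable.encode a)) ↔ ∃ b ∈ f a, Encodable.encode b = n := by
      rw [← Nat.Partrec.Code.evaln_complete, hc]
      simp
    simp only [Option.bind_eq_some_iff]
    constructor
    · intro hb
      obtain ⟨t, ht⟩ := (heval _).2 ⟨b, hb, rfl⟩
      exact ⟨t, _, ht, Encodable.encodek b⟩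
    · rintro ⟨t, n, hn, hb⟩
      obtain ⟨b', hb', rfl⟩ := (heval n).1 ⟨t, hn⟩
      rw [Encodable.encodek, Option.some_inj] at hb
      exact hb ▸ hb'

theorem IsEnumeration.heavy [BEq β] [LawfulBEq β] {L : α → ℕ → List β} (hL : IsEnumeration L)
    {h : α → ℕ} (hh : Computable h) : IsEnumeration fun a t => heavy (h a) (L a t) :=
  hL.postcomp (g := fun a l => _root_.heavy (h a) l)
    (primrec₂_heavy.to_comp.comp (hh.comp Computable.fst) Computable.snd)
    fun _ _ _ hl => heavy_prefix_of_prefix _ hl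

theorem exists_isEnumeration_values {f : α → BStr →. β} (hf : Partrec₂ f) :
    ∃ L : α × ℕ → ℕ → List β, IsEnumeration L ∧ (∀ a w t, (L (a, w) t).length ≤ 2 ^ w) ∧
      ∀ a w b, (∃ t, b ∈ L (a, w) t) ↔ ∃ r : BStr, r.length = w ∧ b ∈ f a r := by
  obtain ⟨e, he, hfe⟩ := exists_computable_stages hf
  let found (q : α × ℕ) (n : ℕ) : Option β :=
    (Encodable.decode n : Option (BStr × ℕ)).bind fun s =>
      if s.1.length = q.2 then e (q.1, s.1) s.2 else none
  have hfound : Computable₂ found := by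
    have hlength : PrimrecPred fun s : ((α × ℕ) × ℕ) × (BStr × ℕ) => s.2.1.length = s.1.1.2 :=
      Primrec.eq.comp (Primrec.list_length.comp (Primrec.fst.comp Primrec.snd))
        (Primrec.snd.comp (Primrec.fst.comp Primrec.fst))
    have hstage : Computable fun s : ((α × ℕ) × ℕ) × (BStr × ℕ) => e (s.1.1.1, s.2.1) s.2.2 :=
      he.comp ((Computable.fst.comp (Computable.fst.comp Computable.fst)).pair
        (Computable.fst.comp Computable.snd)) (Computable.snd.comp Computable.snd)
    refine Computable.option_bind (Computable.decode.comp Computable.snd) ?_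
    exact (Computable.cond hlength.decide.to_comp hstage (Computable.const none)).of_eq
      fun s => by simp [Bool.cond_decide]
  have hmem (a : α) (w : ℕ) (b : β) :
      (∃ t, b ∈ heavy 1 ((List.range t).filterMap (found (a, w)))) ↔
        ∃ r : BStr, r.length = w ∧ b ∈ f a r := by
    simp only [mem_heavy_one, List.mem_filterMap, List.mem_range, found, Option.bind_eq_some_iff,
      Option.ite_none_right_eq_some]
    constructor
    · rintro ⟨-, n, -, ⟨r, s⟩, -, hr, hs⟩
      exact ⟨r, hr, (hfe (a, r) b).2 ⟨s, hs⟩⟩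
    · rintro ⟨r, hr, hb⟩
      obtain ⟨s, hs⟩ := (hfe (a, r) b).1 hb
      exact ⟨_, Encodable.encode (r, s), Nat.lt_succ_self _, (r, s), Encodable.encodek _, hr, hs⟩
  refine ⟨_, (isEnumeration_filterMap_range hfound).heavy (Computable.const 1),
    fun a w t => ?_, hmem⟩
  exact length_le_of_nodup_of_forall_mem (nodup_heavy one_pos _) fun b hb => (hmem a w b).1 ⟨t, hb⟩

variable {D : BStr →. BStr} {E : BStr → BStr →. BStr}

theorem OptimalDM.exists_C_le_of_mem (hD : OptimalDM D) {L : α → ℕ → List β}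
    (hL : IsEnumeration L) {f : α → β → BStr} (hf : Computable₂ f) :
    ∃ c : ℕ, ∀ a t b M, b ∈ L a t → (L a t).length ≤ 2 ^ M →
      C D (f a b) ≤ M + 2 * codeLength a + c := by
  obtain ⟨c, hc⟩ := hD.exists_C_le_length_add_codeLength
    (F := fun a u => (Nat.rfindOpt fun t => (L a t)[ofBits u]?).map (f a))
    (hL.partrec₂_rfindOpt.map (hf.comp (Computable.fst.comp Computable.fst) Computable.snd).to₂)
  refine ⟨c, fun a t b M hb hM => ?_⟩
  obtain ⟨u, hu, hbu⟩ := hL.exists_bits_mem_rfindOpt hb hM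
  have := hc a u (f a b) (Part.mem_map _ hbu)
  omega

theorem OptimalCDM.exists_Ccond_le_of_mem (hE : OptimalCDM E) {L : α × BStr → ℕ → List BStr}
    (hL : IsEnumeration L) :
    ∃ c : ℕ, ∀ a y t x M, x ∈ L (a, y) t → (L (a, y) t).length ≤ 2 ^ M →
      Ccond E x y ≤ M + 2 * codeLength a + c := by
  obtain ⟨c, hc⟩ := hE.exists_Ccond_le_length_add_codeLength
    (F := fun q y => Nat.rfindOpt fun t => (L (q.1, y) t)[ofBits q.2]?)
    (hL.partrec₂_rfindOpt.comp ((Computable.fst.comp Computable.fst).pair Computable.snd)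
      (Computable.snd.comp Computable.fst))
  refine ⟨c, fun a y t x M hx hM => ?_⟩
  obtain ⟨u, hu, hxu⟩ := hL.exists_bits_mem_rfindOpt hx hM
  have := hc a u x y hxu
  omega

theorem OptimalDM.exists_C_le_of_le_count (hD : OptimalDM D) {L : α → ℕ → List BStr}
    (hL : IsEnumeration L) :
    ∃ c : ℕ, ∀ a k t x w, 2 ^ k ≤ (L a t).count x → (L a t).length ≤ 2 ^ (w + k) →
      C D x ≤ w + 2 * codeLength (a, k) + c := by
  obtain ⟨c, hc⟩ := hD.exists_C_le_of_mem ((hL.comp_param Computable.fst).heavy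
    (h := fun q : α × ℕ => 2 ^ q.2) (primrec_two_pow.comp Primrec.snd).to_comp)
    (f := fun _ x => x) Computable.snd
  refine ⟨c, fun a k t x w hcount hlength => ?_⟩
  refine hc (a, k) t x w ((mem_heavy (Nat.two_pow_pos k)).2 hcount) ?_
  have h := (length_heavy_mul_le (Nat.two_pow_pos k) (L a t)).trans hlength
  rw [pow_add] at h
  exact Nat.le_of_mul_le_mul_right h (Nat.two_pow_pos k)

end Enumerations

section SymmetryOfInformation

variable {α β γ : Type*}

section Fiber

variable [BEq γ]

/-- The first components of the pairs in `l` whose second component is `c`. -/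
def fiber (c : γ) (l : List (β × γ)) : List β :=
  l.filterMap fun q => if q.2 == c then some q.1 else none

variable [LawfulBEq γ]

theorem mem_fiber {b : β} {c : γ} {l : List (β × γ)} : b ∈ fiber c l ↔ (b, c) ∈ l := by
  simp only [fiber, List.mem_filterMap, Option.ite_none_right_eq_some, Option.some_inj, beq_iff_eq]
  constructor
  · rintro ⟨q, hq, rfl, rfl⟩
    exact hq
  · exact fun h => ⟨_, h, rfl, rfl⟩

theorem length_fiber (c : γ) (l : List (β × γ)) :
    (fiber c l).length = (l.map Prod.snd).count c := by
  induction l with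
  | nil => rfl
  | cons q l ih =>
    rw [List.map_cons, List.count_cons, ← ih]
    by_cases hq : q.2 = c <;> simp [fiber, hq]

theorem IsEnumeration.fiber [Primcodable α] [Primcodable β] [Primcodable γ]
    {L : α → ℕ → List (β × γ)} (hL : IsEnumeration L) :
    IsEnumeration fun (q : α × γ) t => fiber q.2 (L q.1 t) := by
  have hfiber : Primrec₂ fun (q : α × γ) (l : List (β × γ)) => _root_.fiber q.2 l := by
    have heq : PrimrecPred fun s : ((α × γ) × List (β × γ)) × (β × γ) =>
        s.2.2 == s.1.1.2 :=
      (Primrec.eq.comp (Primrec.snd.comp Primrec.snd)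
        (Primrec.snd.comp (Primrec.fst.comp Primrec.fst))).of_eq fun _ => beq_iff_eq.symm
    exact Primrec.listFilterMap Primrec.snd (Primrec.ite heq
      (Primrec.option_some.comp (Primrec.fst.comp Primrec.snd)) (Primrec.const none))
  exact (hL.comp_param Computable.fst).postcomp hfiber.to_comp fun _ _ _ h => h.filterMap _

end Fiber

variable [Primcodable α] {D : BStr →. BStr} {E : BStr → BStr →. BStr}

theorem exists_C_add_Ccond_le_length (hD : OptimalDM D) (hE : OptimalCDM E)
    {R : α → BStr →. BStr × BStr} (hR : Partrec₂ R) :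
    ∃ c : ℕ, ∀ a r x z, (x, z) ∈ R a r →
      C D z + Ccond E x z ≤ r.length + 16 * (codeLength a + codeLength r.length) + c := by
  obtain ⟨L, hL, hlength, hvalues⟩ := exists_isEnumeration_values hR
  obtain ⟨c₁, hc₁⟩ := hD.exists_C_le_of_le_count (hL.map (f := fun _ => Prod.snd)
    (Primrec.snd.comp Primrec.snd))
  obtain ⟨c₂, hc₂⟩ := hE.exists_Ccond_le_of_mem hL.fiber
  refine ⟨c₁ + c₂ + 1, fun a r x z hxz => ?_⟩
  obtain ⟨t, ht⟩ := (hvalues a r.length (x, z)).2 ⟨r, rfl, hxz⟩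
  set w := r.length
  set N := ((L (a, w) t).map Prod.snd).count z with hN
  have hN_pos : N ≠ 0 := (List.count_pos_iff.2 (List.mem_map_of_mem (f := Prod.snd) ht)).ne'
  have hN_le : N ≤ 2 ^ w :=
    List.count_le_length.trans ((List.length_map _).trans_le (hlength a w t))
  -- At most `2 ^ (w - k)` strings `z'` occur in `2 ^ k` pairs or more, and `z` is one of them;
  -- within the pairs containing `z`, the string `x` is given by an index of `k + 1` bits.
  set k := Nat.log 2 N
  have hkw : k ≤ w := by
    simpa using Nat.log_mono_right (b := 2) hN_le
  have hz : C D z ≤ w - k + 2 * codeLength ((a, w), k) + c₁ := by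
    refine hc₁ (a, w) k t z (w - k) (Nat.pow_log_le_self 2 hN_pos) ?_
    rw [Nat.sub_add_cancel hkw, List.length_map]
    exact hlength a w t
  have hx : Ccond E x z ≤ k + 1 + 2 * codeLength (a, w) + c₂ := by
    refine hc₂ (a, w) z t x (k + 1) (mem_fiber.2 ht) ?_
    rw [length_fiber, ← hN]
    exact (Nat.lt_pow_succ_log_self one_lt_two N).le
  have hcode₁ := codeLength_prod_le (a, w) k
  have hcode₂ := codeLength_prod_le a w
  have hcode₃ : codeLength k ≤ codeLength w := Nat.size_le_size hkw
  omega

variable [Primcodable β]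

theorem exists_C_add_Ccond_le_of_mem (hD : OptimalDM D) (hE : OptimalCDM E)
    {L : α → ℕ → List (β × BStr)} (hL : IsEnumeration L) {f : β → BStr} (hf : Computable f) :
    ∃ c : ℕ, ∀ a t b x M, (b, x) ∈ L a t → ((L a t).map Prod.snd).count x ≤ 2 ^ M →
      C D (f b) + Ccond E x (f b) ≤
        C D x + M + 16 * (codeLength (a, C D x) + codeLength (C D x + M)) + c := by
  -- A program consists of a shortest program of `x`, of length `q.2`, and an index in the fiber.
  let R (q : α × ℕ) (r : BStr) : Part (BStr × BStr) :=
    (D (r.take q.2)).bind fun x =>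
      (Nat.rfindOpt fun t => (fiber x (L q.1 t))[ofBits (r.drop q.2)]?).map fun b => (x, f b)
  have hR : Partrec₂ R := by
    have hprogram : Computable fun s : (α × ℕ) × BStr => s.2.take s.1.2 :=
      (Primrec.list_take.comp (Primrec.snd.comp Primrec.fst) Primrec.snd).to_comp
    have hindex : Computable fun s : ((α × ℕ) × BStr) × BStr => s.1.2.drop s.1.1.2 :=
      (Primrec.list_drop.comp (Primrec.snd.comp (Primrec.fst.comp Primrec.fst))
        (Primrec.snd.comp Primrec.fst)).to_comp
    have hparam : Computable fun s : ((α × ℕ) × BStr) × BStr => (s.1.1.1, s.2) :=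
      (Computable.fst.comp (Computable.fst.comp Computable.fst)).pair Computable.snd
    refine (hD.1.comp hprogram).bind ((hL.fiber.partrec₂_rfindOpt.comp hparam hindex).map ?_)
    exact (Computable.snd.comp Computable.fst).pair (hf.comp Computable.snd)
  obtain ⟨c, hc⟩ := exists_C_add_Ccond_le_length hD hE hR
  refine ⟨c, fun a t b x M hbx hM => ?_⟩
  obtain ⟨p, hp, hp_length⟩ := hD.exists_shortest_program x
  obtain ⟨u, hu, hbu⟩ := hL.fiber.exists_bits_mem_rfindOpt (a := (a, x)) (t := t) (M := M)
    (mem_fiber.2 hbx) ((length_fiber x _).trans_le hM)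
  have hmem : (x, f b) ∈ R (a, C D x) (p ++ u) := by
    refine Part.mem_bind_iff.2 ⟨x, ?_, ?_⟩
    · simpa only [List.take_left' hp_length] using hp
    · simpa only [List.drop_left' hp_length] using Part.mem_map (fun b => (x, f b)) hbu
  have hlength : (p ++ u).length ≤ C D x + M := by
    rw [List.length_append]
    omega
  have hcode : codeLength (p ++ u).length ≤ codeLength (C D x + M) := Nat.size_le_size hlength
  have := hc _ _ _ _ hmem
  omega

end SymmetryOfInformation

section Models

variable {D : BStr →. BStr} {E : BStr → BStr →. BStr} {enc : Finset BStr → BStr}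

theorem OptimalDM.exists_C_apply_le (hD : OptimalDM D) {f : BStr → BStr} (hf : Computable f) :
    ∃ c : ℕ, ∀ x, C D (f x) ≤ C D x + c := by
  obtain ⟨c, hc⟩ := hD.exists_C_le_length_add (hD.1.map (hf.comp Computable.snd).to₂)
  refine ⟨c, fun x => ?_⟩
  obtain ⟨p, hp, hlength⟩ := hD.exists_shortest_program x
  exact hlength ▸ hc p (f x) (Part.mem_map f hp)

theorem SetEncoding.exists_C_singleton_le (henc : SetEncoding enc) (hD : OptimalDM D) :
    ∃ c : ℕ, ∀ x, C D (enc {x}) ≤ C D x + c := by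
  have hcons : Computable fun x : BStr => [x] :=
    (Primrec.list_cons.comp Primrec.id (Primrec.const [])).to_comp
  obtain ⟨c, hc⟩ := hD.exists_C_apply_le (henc.2.comp hcons)
  exact ⟨c, fun x => by simpa using hc x⟩

theorem SetEncoding.exists_elements (henc : SetEncoding enc) :
    ∃ elements : BStr →. List BStr, Partrec elements ∧
      ∀ S, ∃ v ∈ elements (enc S), v.Nodup ∧ v.toFinset = S := by
  let attempt (z : BStr) (t : ℕ) : Option (List BStr) :=
    (Encodable.decode t : Option (List BStr)).bind fun v =>
      if enc v.toFinset = z then some (heavy 1 v) else none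
  refine ⟨fun z => Nat.rfindOpt (attempt z), Partrec.rfindOpt ?_, fun S => ?_⟩
  · have heq : Computable fun s : (BStr × ℕ) × List BStr => decide (enc s.2.toFinset = s.1.1) :=
      (Primrec.eq (α := BStr)).decide.to_comp.comp (henc.2.comp Computable.snd)
        (Computable.fst.comp Computable.fst)
    have hheavy : Computable fun s : (BStr × ℕ) × List BStr => some (heavy 1 s.2) :=
      Computable.option_some.comp
        (primrec₂_heavy.to_comp.comp (Computable.const 1) Computable.snd)
    refine Computable.option_bind (Computable.decode.comp Computable.snd) ?_
    exact (Computable.cond heq hheavy (Computable.const none)).of_eq fun s => by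
      simp [Bool.cond_decide]
  · have hdom : (Nat.rfindOpt (attempt (enc S))).Dom := by
      refine Nat.rfindOpt_dom.2 ⟨Encodable.encode S.toList, heavy 1 S.toList, ?_⟩
      simp [attempt, Encodable.encodek]
    obtain ⟨v, hv⟩ := Part.dom_iff_mem.1 hdom
    refine ⟨v, hv, ?_⟩
    obtain ⟨t, ht⟩ := Nat.rfindOpt_spec hv
    simp only [attempt, Option.mem_def, Option.bind_eq_some_iff,
      Option.ite_none_right_eq_some, Option.some_inj] at ht
    obtain ⟨v', -, hv', rfl⟩ := ht
    refine ⟨nodup_heavy one_pos v', ?_⟩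
    rw [← henc.1 hv']
    ext y
    simp [mem_heavy_one]

theorem SetEncoding.exists_Ccond_le (henc : SetEncoding enc) (hE : OptimalCDM E) :
    ∃ c : ℕ, ∀ S x l, x ∈ S → S.card ≤ 2 ^ l → Ccond E x (enc S) ≤ l + c := by
  obtain ⟨elements, helements, hdecode⟩ := henc.exists_elements
  obtain ⟨c, hc⟩ := hE.exists_Ccond_le_length_add
    (E' := fun u y => (elements y).bind fun v => (v[ofBits u]? : Option BStr))
    ((helements.comp Computable.snd).bind (Computable.ofOption (Computable.list_getElem?.comp
      Computable.snd (primrec_ofBits.to_comp.comp (Computable.fst.comp Computable.fst)))))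
  refine ⟨c, fun S x l hxS hcard => ?_⟩
  obtain ⟨v, hv, hnodup, rfl⟩ := hdecode S
  obtain ⟨i, hi, rfl⟩ := List.getElem_of_mem (List.mem_toFinset.1 hxS)
  rw [List.toFinset_card_of_nodup hnodup] at hcard
  have hmem : v[i] ∈ (elements (enc v.toFinset)).bind fun v => (v[ofBits i.bits]? : Option BStr) :=
    Part.mem_bind_iff.2 ⟨v, hv, by simp [ofBits_bits, hi]⟩
  have h₁ := hc i.bits v[i] (enc v.toFinset) hmem
  have h₂ := length_bits_le_of_lt (hi.trans_le hcard)
  omega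

theorem SetEncoding.exists_isEnumeration_models (henc : SetEncoding enc) (hD : OptimalDM D) :
    ∃ L : ℕ × ℕ → ℕ → List (List BStr), IsEnumeration L ∧
      (∀ l m t, (L (l, m) t).length ≤ 2 ^ m) ∧
      (∀ l m t, ∀ v ∈ L (l, m) t, v.length ≤ 2 ^ l) ∧
      ∀ S l, S.card ≤ 2 ^ l → ∃ t, ∃ v ∈ L (l, C D (enc S)) t, v.toFinset = S := by
  obtain ⟨elements, helements, hdecode⟩ := henc.exists_elements
  let model (l : ℕ) (p : BStr) : Part (List BStr) :=
    ((D p).bind elements).bind fun v =>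
      ((if v.length ≤ 2 ^ l then some v else none : Option (List BStr)) : Part (List BStr))
  have hmodel : Partrec₂ model := by
    have hshort : PrimrecPred fun s : (ℕ × BStr) × List BStr => s.2.length ≤ 2 ^ s.1.1 :=
      Primrec.nat_le.comp (Primrec.list_length.comp Primrec.snd)
        (primrec_two_pow.comp (Primrec.fst.comp Primrec.fst))
    refine ((hD.1.comp Computable.snd).bind (helements.comp Computable.snd).to₂).bind ?_
    exact (Primrec.ite hshort (Primrec.option_some.comp Primrec.snd)
      (Primrec.const none)).to_comp.ofOption
  obtain ⟨L, hL, hlength, hvalues⟩ := exists_isEnumeration_values hmodel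
  refine ⟨L, hL, hlength, fun l m t v hv => ?_, fun S l hcard => ?_⟩
  · obtain ⟨r, -, hr⟩ := (hvalues l m v).1 ⟨t, hv⟩
    obtain ⟨v', -, hv'⟩ := Part.mem_bind_iff.1 hr
    simp only [Part.mem_coe, Option.mem_def, Option.ite_none_right_eq_some,
      Option.some_inj] at hv'
    exact hv'.2 ▸ hv'.1
  · obtain ⟨p, hp, hp_length⟩ := hD.exists_shortest_program (enc S)
    obtain ⟨v, hv, hnodup, rfl⟩ := hdecode S
    rw [List.toFinset_card_of_nodup hnodup] at hcard
    obtain ⟨t, ht⟩ := (hvalues l _ v).2 ⟨p, hp_length,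
      Part.mem_bind_iff.2 ⟨v, Part.mem_bind_iff.2 ⟨_, hp, hv⟩, by simp [hcard]⟩⟩
    exact ⟨t, v, ht, rfl⟩

end Models

section Blocks

variable {β : Type*}

/-- The consecutive blocks of length `c` of `l`, without the incomplete block at the end. -/
def completeBlocks (c : ℕ) (l : List β) : List (List β) :=
  (List.range (l.length / c)).map fun i => (l.drop (c * i)).take c

/-- What is left of `l` after its blocks of length `c`. -/
def remainder (c : ℕ) (l : List β) : List β := l.drop (c * (l.length / c))

theorem length_completeBlocks (c : ℕ) (l : List β) :
    (completeBlocks c l).length = l.length / c := by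
  simp [completeBlocks]

theorem length_le_of_mem_completeBlocks {c : ℕ} {l b : List β} (hb : b ∈ completeBlocks c l) :
    b.length ≤ c := by
  obtain ⟨i, -, rfl⟩ := List.mem_map.1 hb
  exact List.length_take_le _ _

theorem length_remainder_le {c : ℕ} (hc : 0 < c) (l : List β) : (remainder c l).length ≤ c := by
  have := Nat.mod_lt l.length hc
  have := Nat.div_add_mod l.length c
  rw [remainder, List.length_drop]
  omega

theorem mem_completeBlocks_or_mem_remainder {c : ℕ} (hc : 0 < c) {l : List β} {x : β}
    (hx : x ∈ l) : (∃ b ∈ completeBlocks c l, x ∈ b) ∨ x ∈ remainder c l := by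
  obtain ⟨i, hi, rfl⟩ := List.getElem_of_mem hx
  rcases lt_or_ge i (c * (l.length / c)) with h | h
  · refine Or.inl ⟨_, List.mem_map.2 ⟨i / c, ?_, rfl⟩, ?_⟩
    · rw [List.mem_range]
      exact Nat.div_lt_of_lt_mul h
    · rw [List.mem_iff_getElem]
      have := Nat.mod_lt i hc
      have := Nat.div_add_mod i c
      refine ⟨i % c, ?_, ?_⟩
      · rw [List.length_take, List.length_drop]
        omega
      · simp [Nat.div_add_mod]
  · refine Or.inr (List.mem_iff_getElem.2 ⟨i - c * (l.length / c), ?_, ?_⟩)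
    · rw [remainder, List.length_drop]
      omega
    · simp [remainder, Nat.add_sub_cancel' h]

theorem completeBlocks_prefix_of_prefix (c : ℕ) {l l' : List β} (h : l <+: l') :
    completeBlocks c l <+: completeBlocks c l' := by
  obtain ⟨v, rfl⟩ := h
  have hblocks : completeBlocks c l =
      (List.range (l.length / c)).map fun i => ((l ++ v).drop (c * i)).take c := by
    refine List.map_congr_left fun i hi => ?_
    have hi' : c * (i + 1) ≤ l.length :=
      (Nat.mul_le_mul_left c (List.mem_range.1 hi)).trans (Nat.mul_div_le _ _)
    rw [mul_add_one] at hi'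
    rw [List.drop_append_of_le_length (by omega), List.take_append_of_le_length]
    rw [List.length_drop]
    omega
  rw [hblocks, completeBlocks]
  exact (range_prefix_range (Nat.div_le_div_right (by simp))).map _

variable [Primcodable β]

theorem primrec₂_completeBlocks :
    Primrec₂ (completeBlocks : ℕ → List β → List (List β)) := by
  refine Primrec.list_map (Primrec.list_range.comp (Primrec.nat_div.comp
    (Primrec.list_length.comp Primrec.snd) Primrec.fst)) ?_
  have hc : Primrec fun s : (ℕ × List β) × ℕ => s.1.1 := Primrec.fst.comp Primrec.fst
  exact Primrec.list_take.comp hc (Primrec.list_drop.comp (Primrec.nat_mul.comp hc Primrec.snd)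
    (Primrec.snd.comp Primrec.fst))

theorem primrec₂_remainder : Primrec₂ (remainder : ℕ → List β → List β) :=
  Primrec.list_drop.comp (Primrec.nat_mul.comp Primrec.fst (Primrec.nat_div.comp
    (Primrec.list_length.comp Primrec.snd) Primrec.fst)) Primrec.snd

end Blocks

theorem length_flatten_le_two_pow {β : Type*} {l : List (List β)} {m k : ℕ}
    (hl : l.length ≤ 2 ^ m) (h : ∀ v ∈ l, v.length ≤ 2 ^ k) :
    l.flatten.length ≤ 2 ^ (m + k) := by
  rw [List.length_flatten]
  calc (l.map List.length).sum ≤ l.length * 2 ^ k := by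
        simpa using List.sum_le_card_nsmul (l.map List.length) (2 ^ k) (by simpa using h)
    _ ≤ 2 ^ m * 2 ^ k := Nat.mul_le_mul_right _ hl
    _ = 2 ^ (m + k) := (pow_add ..).symm

section Covering

variable {α β : Type*} [Primcodable α] [Primcodable β] {D : BStr →. BStr} {enc : Finset BStr → BStr}

theorem OptimalDM.exists_C_stage_le (hD : OptimalDM D) {L : α → ℕ → List β}
    (hL : IsEnumeration L) {f : α → List β → BStr} (hf : Computable₂ f) :
    ∃ c : ℕ, ∀ a t m, (L a t).length ≤ 2 ^ m →
      C D (f a (L a t)) ≤ m + 1 + 2 * codeLength a + c := by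
  obtain ⟨c, hc⟩ := hD.exists_C_le_of_mem
    (hL.postcomp (g := fun _ l => l.inits) (primrec_inits.to_comp.comp Computable.snd)
      fun _ _ _ h => prefix_inits_of_prefix h) hf
  refine ⟨c, fun a t m hm => hc a t _ (m + 1) ?_ ?_⟩
  · simp
  · have := Nat.one_le_two_pow (n := m)
    rw [List.length_inits, pow_succ]
    omega

theorem SetEncoding.exists_C_completeBlock_le (henc : SetEncoding enc) (hD : OptimalDM D)
    {L : α → ℕ → List BStr} (hL : IsEnumeration L) :
    ∃ c : ℕ, ∀ a r t b m, b ∈ completeBlocks (2 ^ r) (L a t) → (L a t).length ≤ 2 ^ (m + r) →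
      C D (enc b.toFinset) ≤ m + 2 * codeLength (a, r) + c := by
  have hpow : Primrec fun q : (α × ℕ) × List BStr => 2 ^ q.1.2 :=
    primrec_two_pow.comp (Primrec.snd.comp Primrec.fst)
  obtain ⟨c, hc⟩ := hD.exists_C_le_of_mem
    ((hL.comp_param Computable.fst).postcomp (g := fun (q : α × ℕ) l => completeBlocks (2 ^ q.2) l)
      (primrec₂_completeBlocks.comp hpow Primrec.snd).to_comp
      fun _ _ _ h => completeBlocks_prefix_of_prefix _ h)
    (f := fun _ b => enc b.toFinset) (henc.2.comp Computable.snd)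
  refine ⟨c, fun a r t b m hb hm => hc (a, r) t b m hb ?_⟩
  rw [length_completeBlocks]
  exact Nat.div_le_of_le_mul (by rwa [← pow_add, add_comm r m])

theorem IsEnumeration.flatten {L : α → ℕ → List (List β)} (hL : IsEnumeration L) :
    IsEnumeration fun a t => (L a t).flatten :=
  hL.postcomp (g := fun _ l => l.flatten) (Primrec.list_flatten.to_comp.comp Computable.snd)
    fun _ _ _ h => h.flatten

/- The elements belonging to at least `2 ^ k` of the listed sets form a list of length at most
`2 ^ (m + r)`, enumerated in a fixed order. Cut it into blocks of length `2 ^ r`: a complete block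
is determined by its index, and the remainder by the number of listed sets. -/
theorem SetEncoding.exists_small_model (henc : SetEncoding enc) (hD : OptimalDM D)
    {L : α → ℕ → List (List BStr)} (hL : IsEnumeration L) :
    ∃ c : ℕ, ∀ a k r t x m, 2 ^ k ≤ (L a t).flatten.count x → (L a t).length ≤ 2 ^ m →
      (∀ v ∈ L a t, v.length ≤ 2 ^ (r + k)) →
      ∃ S : Finset BStr, x ∈ S ∧ S.card ≤ 2 ^ r ∧
        C D (enc S) ≤ m + 1 + 2 * codeLength ((a, k), r) + c := by
  have hheavy := (hL.comp_param (γ := α × ℕ) Computable.fst).flatten.heavy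
    (primrec_two_pow.comp Primrec.snd).to_comp
  obtain ⟨c₁, hc₁⟩ := henc.exists_C_completeBlock_le hD hheavy
  obtain ⟨c₂, hc₂⟩ := hD.exists_C_stage_le (hL.comp_param (γ := (α × ℕ) × ℕ)
    (Computable.fst.comp Computable.fst))
    (f := fun q l => enc (remainder (2 ^ q.2) (heavy (2 ^ q.1.2) l.flatten)).toFinset)
    (henc.2.comp (primrec₂_remainder.comp
      (primrec_two_pow.comp (Primrec.snd.comp Primrec.fst))
      (primrec₂_heavy.comp
        (primrec_two_pow.comp (Primrec.snd.comp (Primrec.fst.comp Primrec.fst)))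
        (Primrec.list_flatten.comp Primrec.snd))).to_comp)
  refine ⟨c₁ + c₂, fun a k r t x m hcount hm hlength => ?_⟩
  have hx := (mem_heavy (Nat.two_pow_pos k)).2 hcount
  have htotal : (heavy (2 ^ k) (L a t).flatten).length ≤ 2 ^ (m + r) := by
    refine Nat.le_of_mul_le_mul_right ?_ (Nat.two_pow_pos k)
    calc (heavy (2 ^ k) (L a t).flatten).length * 2 ^ k ≤ (L a t).flatten.length :=
          length_heavy_mul_le (Nat.two_pow_pos k) _
      _ ≤ 2 ^ (m + (r + k)) := length_flatten_le_two_pow hm hlength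
      _ = 2 ^ (m + r) * 2 ^ k := by ring
  obtain ⟨b, hb, hxb⟩ | hx := mem_completeBlocks_or_mem_remainder (Nat.two_pow_pos r) hx
  · refine ⟨b.toFinset, List.mem_toFinset.2 hxb,
      (List.toFinset_card_le b).trans (length_le_of_mem_completeBlocks hb), ?_⟩
    have := hc₁ (a, k) r t b m hb htotal
    omega
  · refine ⟨_, List.mem_toFinset.2 hx,
      (List.toFinset_card_le _).trans (length_remainder_le (Nat.two_pow_pos r) _), ?_⟩
    exact (hc₂ ((a, k), r) t m hm).trans (by omega)

end Covering

section Improvement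

variable {α β : Type*} [Primcodable α] {D : BStr →. BStr} {E : BStr → BStr →. BStr}
  {enc : Finset BStr → BStr}

theorem map_snd_flatMap_pair (l : List (List β)) :
    (l.flatMap fun v => v.map fun x => (v, x)).map Prod.snd = l.flatten := by
  simp [List.map_flatMap, Function.comp_def]

theorem IsEnumeration.memberPairs [Primcodable β] {L : α → ℕ → List (List β)}
    (hL : IsEnumeration L) :
    IsEnumeration fun a t => (L a t).flatMap fun v => v.map fun x => (v, x) := by
  have hpairs : Primrec fun l : List (List β) => l.flatMap fun v => v.map fun x => (v, x) :=
    Primrec.list_flatMap Primrec.id (Primrec.list_map Primrec.snd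
      ((Primrec.snd.comp Primrec.fst).pair Primrec.snd).to₂).to₂
  exact hL.postcomp (hpairs.to_comp.comp Computable.snd).to₂ fun _ _ _ h => h.flatMap _

theorem SetEncoding.exists_C_add_Ccond_model_le (henc : SetEncoding enc) (hD : OptimalDM D)
    (hE : OptimalCDM E) {L : α → ℕ → List (List BStr)} (hL : IsEnumeration L) :
    ∃ c : ℕ, ∀ a t v x M, v ∈ L a t → x ∈ v → (L a t).flatten.count x ≤ 2 ^ M →
      C D (enc v.toFinset) + Ccond E x (enc v.toFinset) ≤
        C D x + M + 16 * (codeLength (a, C D x) + codeLength (C D x + M)) + c := by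
  obtain ⟨c, hc⟩ := exists_C_add_Ccond_le_of_mem hD hE hL.memberPairs henc.2
  refine ⟨c, fun a t v x M hv hx hM => hc a t v x M ?_ ?_⟩
  · exact List.mem_flatMap.2 ⟨v, hv, List.mem_map_of_mem hx⟩
  · rwa [map_snd_flatMap_pair]

theorem codeLength_le_mul_size {K n a : ℕ} (h : a ≤ K * (n + 2)) :
    codeLength a ≤ (K + 1) * (n + 2).size := by
  have hpos : 0 < (n + 2).size := Nat.size_pos.2 (by omega)
  calc codeLength a ≤ K.size + (n + 2).size := by
        refine Nat.size_le.2 (h.trans_lt ?_)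
        rw [pow_add]
        exact Nat.mul_lt_mul'' (Nat.lt_size_self K) (Nat.lt_size_self _)
    _ ≤ K * (n + 2).size + (n + 2).size := by
        gcongr
        exact (Nat.size_le.2 Nat.lt_two_pow_self).trans (Nat.le_mul_of_pos_right K hpos)
    _ = (K + 1) * (n + 2).size := by ring

theorem SetEncoding.exists_C_le_mul (henc : SetEncoding enc) (hD : OptimalDM D) :
    ∃ K : ℕ, ∀ n x S, x ∈ S → C D (enc S) ≤ n → S.card ≤ 2 ^ n → C D x ≤ K * (n + 2) := by
  obtain ⟨L, hL, hlength, hmodel_length, hmodels⟩ := henc.exists_isEnumeration_models hD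
  obtain ⟨c, hc⟩ := hD.exists_C_le_of_mem hL.flatten (f := fun _ x => x) Computable.snd
  refine ⟨c + 10, fun n x S hxS hm hcard => ?_⟩
  set m := C D (enc S)
  obtain ⟨t, v, hv, rfl⟩ := hmodels S n hcard
  have hx := hc (n, m) t x (m + n) (List.mem_flatten.2 ⟨v, hv, List.mem_toFinset.1 hxS⟩)
    (length_flatten_le_two_pow (hlength n m t) (hmodel_length n m t))
  have hcode := codeLength_prod_le n m
  have hn : codeLength n ≤ n := Nat.size_le.2 Nat.lt_two_pow_self
  have hm' : codeLength m ≤ m := Nat.size_le.2 Nat.lt_two_pow_self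
  nlinarith

theorem SetEncoding.exists_model_of_multiplicity (henc : SetEncoding enc) (hD : OptimalDM D)
    (hE : OptimalCDM E) :
    ∃ c : ℕ, ∀ x S l m, x ∈ S → C D (enc S) = m → S.card ≤ 2 ^ l →
      ∃ k ≤ m + l, ∃ S' : Finset BStr, x ∈ S' ∧ S'.card ≤ 2 ^ (l - k) ∧
        C D (enc S') ≤ m + 1 + 2 * codeLength (((l, m), min k l), l - k) + c ∧
        m + Ccond E x (enc S) ≤
          C D x + (k + 1) +
            16 * (codeLength ((l, m), C D x) + codeLength (C D x + (k + 1))) + c := by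
  obtain ⟨L, hL, hlength, hmodel_length, hmodels⟩ := henc.exists_isEnumeration_models hD
  obtain ⟨c₁, hc₁⟩ := henc.exists_small_model hD hL
  obtain ⟨c₂, hc₂⟩ := henc.exists_C_add_Ccond_model_le hD hE hL
  refine ⟨c₁ + c₂, fun x S l m hxS hm hcard => ?_⟩
  obtain ⟨t, v, hv, rfl⟩ := hmodels S l hcard
  rw [hm] at hv
  rw [List.mem_toFinset] at hxS
  -- The exponent of the number of listed models containing `x`: the larger it is, the smaller
  -- a model can be found, and the smaller it is, the more random `x` is in the given one.
  let k := Nat.log 2 ((L (l, m) t).flatten.count x)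
  have hcount_pos : (L (l, m) t).flatten.count x ≠ 0 :=
    (List.count_pos_iff.2 (List.mem_flatten.2 ⟨v, hv, hxS⟩)).ne'
  have hk : k ≤ m + l := by
    simpa using Nat.log_mono_right (b := 2) (List.count_le_length.trans
      (length_flatten_le_two_pow (hlength l m t) (hmodel_length l m t)))
  have hmany : 2 ^ min k l ≤ (L (l, m) t).flatten.count x :=
    (Nat.pow_le_pow_right two_pos (min_le_left k l)).trans (Nat.pow_log_le_self 2 hcount_pos)
  obtain ⟨S', hxS', hcard', hCS'⟩ := hc₁ (l, m) (min k l) (l - k) t x m hmany (hlength l m t)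
    (by rw [show l - k + min k l = l by omega]; exact hmodel_length l m t)
  have hrandom := hc₂ (l, m) t v x (k + 1) hv hxS (Nat.lt_pow_succ_log_self one_lt_two _).le
  rw [hm] at hrandom
  exact ⟨k, hk, S', hxS', hcard', by omega, by omega⟩

theorem SetEncoding.exists_model_of_multiplicity_log (henc : SetEncoding enc) (hD : OptimalDM D)
    (hE : OptimalCDM E) :
    ∃ c : ℕ, ∀ n x S l, x ∈ S → C D (enc S) ≤ n → S.card ≤ 2 ^ l → l ≤ n →
      ∃ k, ∃ S' : Finset BStr, x ∈ S' ∧ S'.card ≤ 2 ^ (l - k) ∧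
        C D (enc S') ≤ C D (enc S) + c * (n + 2).size ∧
        C D (enc S) + Ccond E x (enc S) ≤ C D x + k + c * (n + 2).size := by
  obtain ⟨K, hK⟩ := henc.exists_C_le_mul hD
  obtain ⟨c, hc⟩ := henc.exists_model_of_multiplicity hD hE
  refine ⟨465 + 48 * K + c, fun n x S l hxS hm hcard hl => ?_⟩
  obtain ⟨k, hk, S', hxS', hcard', hCS', hrandom⟩ := hc x S l _ hxS rfl hcard
  refine ⟨k, S', hxS', hcard', ?_⟩
  have hCx := hK n x S hxS hm (hcard.trans (Nat.pow_le_pow_right two_pos hl))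
  set m := C D (enc S)
  set s := (n + 2).size
  have hs : 0 < s := Nat.size_pos.2 (by omega)
  have hcode (i : ℕ) (hi : i ≤ 2 * (n + 2)) : codeLength i ≤ 3 * s := codeLength_le_mul_size hi
  have hcode_l := hcode l (by omega)
  have hcode_m := hcode m (by omega)
  have hcode_k := hcode (min k l) (by omega)
  have hcode_r := hcode (l - k) (by omega)
  have hcode_Cx : codeLength (C D x) ≤ (K + 1) * s := codeLength_le_mul_size hCx
  have hcode_index : codeLength (C D x + (k + 1)) ≤ (K + 2 + 1) * s :=
    codeLength_le_mul_size (by linarith)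
  have hcode₁ := codeLength_prod_le ((l, m), min k l) (l - k)
  have hcode₂ := codeLength_prod_le (l, m) (min k l)
  have hcode₃ := codeLength_prod_le l m
  have hcode₄ := codeLength_prod_le (l, m) (C D x)
  have hcs : c ≤ c * s := Nat.le_mul_of_pos_right c hs
  simp only [add_mul, mul_assoc] at *
  constructor <;> omega

theorem SetEncoding.exists_improved_model (henc : SetEncoding enc) (hD : OptimalDM D)
    (hE : OptimalCDM E) :
    ∃ c : ℕ, ∀ n x S l, x ∈ S → C D (enc S) ≤ n → S.card ≤ 2 ^ l → l ≤ n →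
      ∃ S' : Finset BStr, ∃ r, x ∈ S' ∧ S'.card ≤ 2 ^ r ∧
        C D (enc S') ≤ C D (enc S) + c * (n + 2).size ∧
        C D (enc S') + r + Ccond E x (enc S) ≤ C D x + l + c * (n + 2).size := by
  obtain ⟨c, hc⟩ := henc.exists_model_of_multiplicity_log hD hE
  obtain ⟨c₁, hc₁⟩ := henc.exists_C_singleton_le hD
  obtain ⟨c₂, hc₂⟩ := henc.exists_Ccond_le hE
  refine ⟨2 * c + c₁ + c₂, fun n x S l hxS hm hcard hl => ?_⟩
  obtain ⟨k, S', hxS', hcard', hCS', hrandom⟩ := hc n x S l hxS hm hcard hl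
  refine ⟨S', l - k, hxS', hcard', by nlinarith, ?_⟩
  have hs : 0 < (n + 2).size := Nat.size_pos.2 (by omega)
  simp only [add_mul, mul_assoc]
  rcases le_or_gt k l with hkl | hlk
  · omega
  · have hsingleton : S' = {x} := by
      refine (Finset.eq_of_subset_of_card_le (Finset.singleton_subset_iff.2 hxS') ?_).symm
      simpa [Nat.sub_eq_zero_of_le hlk.le] using hcard'
    have hCx : C D (enc S') ≤ C D x + c₁ := hsingleton ▸ hc₁ x
    have hCcond := hc₂ S x l hxS hcard
    have hcs₁ : c₁ ≤ c₁ * (n + 2).size := Nat.le_mul_of_pos_right c₁ hs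
    have hcs₂ : c₂ ≤ c₂ * (n + 2).size := Nat.le_mul_of_pos_right c₂ hs
    omega

end Improvement

theorem one_le_logb_add_two (n : ℕ) : 1 ≤ Real.logb 2 (n + 2) := by
  rw [Real.le_logb_iff_rpow_le one_lt_two (by positivity), Real.rpow_one]
  exact le_add_of_nonneg_left n.cast_nonneg

theorem size_le_two_mul_logb (n : ℕ) : ((n + 2).size : ℝ) ≤ 2 * Real.logb 2 (n + 2) := by
  have hsize : (n + 2).size ≤ Nat.log 2 (n + 2) + 1 :=
    Nat.size_le.2 (Nat.lt_pow_succ_log_self one_lt_two _)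
  have hlog : (Nat.log 2 (n + 2) : ℝ) ≤ Real.logb 2 (n + 2) := by
    exact_mod_cast Real.natLog_le_logb (n + 2) 2
  have hsize' : ((n + 2).size : ℝ) ≤ Nat.log 2 (n + 2) + 1 := by exact_mod_cast hsize
  linarith [one_le_logb_add_two n]

theorem clog_two_le_logb_add_one {N : ℕ} (hN : N ≠ 0) :
    (Nat.clog 2 N : ℝ) ≤ Real.logb 2 N + 1 := by
  have hlog : 0 ≤ Real.logb 2 N :=
    Real.logb_nonneg one_lt_two (Nat.one_le_cast.2 (Nat.one_le_iff_ne_zero.2 hN))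
  simpa [← Real.natCeil_logb_natCast] using (Nat.ceil_lt_add_one hlog).le

theorem logb_two_le_of_le_two_pow {N r : ℕ} (hN : N ≠ 0) (h : N ≤ 2 ^ r) :
    Real.logb 2 N ≤ r := by
  rw [Real.logb_le_iff_le_rpow one_lt_two (by positivity), Real.rpow_natCast]
  exact_mod_cast h

theorem stmt0_general (D : BStr →. BStr) (hD : OptimalDM D)
    (E : BStr → BStr →. BStr) (hE : OptimalCDM E)
    (enc : Finset BStr → BStr) (henc : SetEncoding enc) :
    ∃ c : ℝ, ∀ (n : ℕ) (x : BStr) (S : Finset BStr), x ∈ S → C D (enc S) ≤ n → S.card ≤ 2 ^ n →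
      ∃ S' : Finset BStr, x ∈ S' ∧
        (C D (enc S') : ℝ) ≤ (C D (enc S) : ℝ) + c * Real.logb 2 ((n : ℝ) + 2) ∧
        (C D (enc S') : ℝ) + Real.logb 2 (S'.card : ℝ) - (C D x : ℝ) ≤
          (Real.logb 2 (S.card : ℝ) - (Ccond E x (enc S) : ℝ))
            + c * Real.logb 2 ((n : ℝ) + 2) := by
  obtain ⟨c, hc⟩ := henc.exists_improved_model hD hE
  refine ⟨2 * (c + 1), fun n x S hxS hm hcard => ?_⟩
  obtain ⟨S', r, hxS', hcard', hC, hδ⟩ := hc n x S (Nat.clog 2 S.card) hxS hm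
    (Nat.le_pow_clog one_lt_two _) (Nat.clog_le_of_le_pow hcard)
  have hsize : (c : ℝ) * (n + 2).size ≤ c * (2 * Real.logb 2 (n + 2)) := by
    gcongr
    exact size_le_two_mul_logb n
  have hlog := one_le_logb_add_two n
  have hS := clog_two_le_logb_add_one (Finset.card_ne_zero_of_mem hxS)
  have hS' := logb_two_le_of_le_two_pow (Finset.card_ne_zero_of_mem hxS') hcard'
  have hC' : (C D (enc S') : ℝ) ≤ C D (enc S) + c * (n + 2).size := by exact_mod_cast hC
  have hδ' : (C D (enc S') : ℝ) + r + Ccond E x (enc S) ≤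
      C D x + Nat.clog 2 S.card + c * (n + 2).size := by exact_mod_cast hδ
  exact ⟨S', hxS', by linarith, by linarith⟩

/-- **Vereshchagin–Vitányi.** Every good statistical model in the
randomness-deficiency sense can be converted into one of essentially the same
complexity that is good in the optimality-deficiency sense. -/
theorem stmt0 (D : BStr →. BStr) (hD : OptimalDM D)
    (E : BStr → BStr →. BStr) (hE : OptimalCDM E)
    (enc : Finset BStr → BStr) (henc : SetEncoding enc) :
    ∃ c : ℝ, ∀ n : ℕ, ∀ x : BStr, x.length = n →
      ∀ S : Finset BStr, x ∈ S → C D (enc S) ≤ n → S.card ≤ 2 ^ n →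
      ∃ S' : Finset BStr, x ∈ S' ∧
        (C D (enc S') : ℝ) ≤ (C D (enc S) : ℝ) + c * Real.logb 2 ((n : ℝ) + 2) ∧
        (C D (enc S') : ℝ) + Real.logb 2 (S'.card : ℝ) - (C D x : ℝ) ≤
          (Real.logb 2 (S.card : ℝ) - (Ccond E x (enc S) : ℝ))
            + c * Real.logb 2 ((n : ℝ) + 2) := by
  obtain ⟨c, hc⟩ := stmt0_general D hD E hE enc henc
  exact ⟨c, fun n x _ => hc n x⟩
end

section
/- There exists a constant c such that for every natural number n and all natural numbers α, β with 2α + β < n − c·log(n+2), there exists a binary string of length n that is not (α, β)-stochastic. (Existence of non-stochastic objects.) -/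
open scoped Classical

/-!
Among the programs of length at most `α` that print the code of a finite set, let `p` be the one
that takes longest to halt. From `p` (at most `α` bits) together with `n` and `α` (`O(log n)` bits)
one can compute a time by which all of them have halted, hence the list of all sets of complexity at
most `α`. There are fewer than `2 ^ (α + 1)` of those, so the ones with fewer than `2 ^ (n - α - 1)`
elements do not cover `{0,1}ⁿ`, and a string `x` outside them can be found effectively. Thus
`C(x) ≤ α + O(log n)`, whereas every set of complexity at most `α` containing `x` has `log`-size at
least `n - α - 1`; the randomness deficiency of `x` exceeds `β` once `2α + β < n - O(log n)`.
-/

section Computability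

open Encodable

variable {α σ : Type} [Primcodable α] [Primcodable σ]

/-- A step-bounded evaluation of the partial recursive function `f`: `ev t a` is the value `f a` if
the computation stops within `t` steps and `none` otherwise. Unlike `TimedDM` it is primitive
recursive, a property inherited by predicates built from it with bounded quantifiers. -/
structure IsStepEvaluator (ev : ℕ → α → Option σ) (f : α →. σ) : Prop where
  primrec : Primrec₂ ev
  monotone : ∀ a y, Monotone fun t => y ∈ ev t a
  mem_iff : ∀ a y, y ∈ f a ↔ ∃ t, y ∈ ev t a

theorem exists_isStepEvaluator {f : α →. σ} (hf : Partrec f) : ∃ ev, IsStepEvaluator ev f := by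
  obtain ⟨c, hc⟩ := Nat.Partrec.Code.exists_code.1 hf
  have mem_eval (a : α) (k : ℕ) : k ∈ c.eval (encode a) ↔ ∃ y ∈ f a, encode y = k := by
    simp [hc]
  refine ⟨fun t a => (c.evaln t (encode a)).bind decode, ?_, ?_, ?_⟩
  · exact Primrec.option_bind
      (Nat.Partrec.Code.primrec_evaln.comp
        ((Primrec.fst.pair (Primrec.const c)).pair (Primrec.encode.comp Primrec.snd)))
      (Primrec.decode.comp Primrec.snd)
  · intro a y t t' htt' hy
    obtain ⟨k, hk, hky⟩ := Option.mem_bind_iff.1 hy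
    exact Option.mem_bind_iff.2 ⟨k, Nat.Partrec.Code.evaln_mono htt' hk, hky⟩
  · intro a y
    constructor
    · intro hy
      obtain ⟨t, ht⟩ := Nat.Partrec.Code.evaln_complete.1 ((mem_eval a _).2 ⟨y, hy, rfl⟩)
      exact ⟨t, Option.mem_bind_iff.2 ⟨_, ht, encodek y⟩⟩
    · rintro ⟨t, ht⟩
      obtain ⟨k, hk, hky⟩ := Option.mem_bind_iff.1 ht
      obtain ⟨z, hz, rfl⟩ := (mem_eval a k).1 (Nat.Partrec.Code.evaln_sound hk)
      rw [encodek, Option.mem_some_iff] at hky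
      exact hky ▸ hz

theorem exists_partrec_uniformization {R : α → σ → Prop}
    (hR : ComputablePred fun p : α × σ => R p.1 p.2) :
    ∃ f : α →. σ, Partrec f ∧ (∀ a, ∀ b ∈ f a, R a b) ∧ ∀ a b, R a b → (f a).Dom := by
  obtain ⟨r, hr, hRr⟩ := ComputablePred.computable_iff.1 hR
  have r_iff (a : α) (b : σ) : r (a, b) ↔ R a b := (iff_of_eq (congrFun hRr (a, b))).symm
  let test (a : α) (k : ℕ) : Option σ :=
    (decode k).bind fun b => cond (r (a, b)) (some b) none
  have mem_test {a : α} {k : ℕ} {b : σ} : b ∈ test a k ↔ b ∈ decode (α := σ) k ∧ R a b := by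
    simp only [test, Bool.cond_eq_ite, Option.mem_bind_iff, Option.mem_ite_none_right,
      Option.mem_some_iff, r_iff]
    exact ⟨fun ⟨_, hb, hab, hbb⟩ => hbb ▸ ⟨hb, hab⟩, fun ⟨hb, hab⟩ => ⟨b, hb, hab, rfl⟩⟩
  have htest : Computable₂ test := by
    refine Computable.option_bind (Computable.decode.comp Computable.snd) ?_
    exact Computable.cond
      (hr.comp ((Computable.fst.comp Computable.fst).pair Computable.snd))
      (Computable.option_some.comp Computable.snd) (Computable.const none)
  refine ⟨fun a => Nat.rfindOpt (test a), Partrec.rfindOpt htest, fun a b hb => ?_,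
    fun a b hab => Nat.rfindOpt_dom.2 ⟨encode b, b, mem_test.2 ⟨encodek b, hab⟩⟩⟩
  obtain ⟨k, hk⟩ := Nat.rfindOpt_spec hb
  exact (mem_test.1 hk).2

theorem exists_partrec_section {g : α → σ} (hg : Computable g) :
    ∃ f : σ →. α, Partrec f ∧ (∀ y, ∀ a ∈ f y, g a = y) ∧ ∀ a, (f (g a)).Dom := by
  have hR : ComputablePred fun p : σ × α => g p.2 = p.1 :=
    Computable.computablePred
      (Primrec.eq.decide.to_comp.comp (hg.comp Computable.snd) Computable.fst)
  obtain ⟨f, hf, hsound, hdom⟩ := exists_partrec_uniformization (R := fun y a => g a = y) hR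
  exact ⟨f, hf, hsound, fun a => hdom _ a rfl⟩

theorem primrecRel_list_mem : PrimrecRel fun (a : α) (l : List α) => a ∈ l := by
  have hswap : PrimrecRel fun (a : α) (l : List α) => ∃ b ∈ l, b = a :=
    (PrimrecRel.exists_mem_list Primrec.eq).comp Primrec.snd Primrec.fst
  exact hswap.of_eq fun a l => by simp only [exists_eq_right]

theorem primrec_list_dedup [DecidableEq α] : Primrec (List.dedup : List α → List α) := by
  have hinsert : Primrec₂ fun (_ : List α) (p : α × List α) =>
      if p.1 ∈ p.2 then p.2 else p.1 :: p.2 :=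
    (Primrec.ite primrecRel_list_mem Primrec.snd Primrec.list_cons).comp Primrec.snd
  refine (Primrec.list_foldr Primrec.id (Primrec.const []) hinsert).of_eq fun l => ?_
  induction l with
  | nil => rfl
  | cons a l ih =>
    simp only [id_eq, List.foldr_cons] at ih ⊢
    rw [ih, List.dedup_cons']

theorem primrec_list_toFinset_card [DecidableEq α] : Primrec fun l : List α => l.toFinset.card :=
  (Primrec.list_length.comp primrec_list_dedup).of_eq fun l => (List.card_toFinset l).symm

end Computability

section Combinatorics

variable {ι τ α : Type*}

theorem exists_least_of_isUpperSet [LinearOrder τ] {s : ι → Set τ} (hs : ∀ i, IsUpperSet (s i))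
    {J : Finset ι} (hJ : J.Nonempty) : ∃ p ∈ J, ∀ q ∈ J, s p ⊆ s q := by
  obtain ⟨p, hp⟩ := J.exists_minimalFor s hJ
  exact ⟨p, hp.1, fun q hq => ((hs p).total (hs q)).elim id fun hqp => hp.2 hq hqp⟩

theorem exists_mem_forall_card_le_card_mul_card {U : Finset α} (hU : U.Nonempty) (I : Finset ι)
    (A : ι → Finset α) :
    ∃ x ∈ U, ∀ i ∈ I, x ∈ A i → U.card ≤ I.card * (A i).card := by
  by_contra! hsmall
  set J : Finset ι := {i ∈ I | I.card * (A i).card < U.card}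
  have hcover : U ⊆ J.biUnion A := fun x hx => by
    obtain ⟨i, hi, hxi, hlt⟩ := hsmall x hx
    exact Finset.mem_biUnion.2 ⟨i, Finset.mem_filter.2 ⟨hi, hlt⟩, hxi⟩
  have hJ : J.Nonempty := Finset.biUnion_nonempty.1 (hU.mono hcover) |>.imp fun _ h => h.1
  have : I.card * U.card < I.card * U.card :=
    calc I.card * U.card ≤ I.card * ∑ i ∈ J, (A i).card :=
          Nat.mul_le_mul_left _ ((Finset.card_le_card hcover).trans Finset.card_biUnion_le)
      _ = ∑ i ∈ J, I.card * (A i).card := Finset.mul_sum ..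
      _ < ∑ _i ∈ J, U.card :=
          Finset.sum_lt_sum_of_nonempty hJ fun i hi => (Finset.mem_filter.1 hi).2
      _ = J.card * U.card := by rw [Finset.sum_const, smul_eq_mul]
      _ ≤ I.card * U.card := Nat.mul_le_mul_right _ (Finset.card_filter_le _ _)
  exact this.false

end Combinatorics

theorem IsStepEvaluator.exists_slowest {α σ : Type} [Primcodable α] [Primcodable σ]
    {ev : ℕ → α → Option σ} {f : α →. σ} (hev : IsStepEvaluator ev f) {J : Finset α}
    (hJ : ∃ q ∈ J, (f q).Dom) :
    ∃ p ∈ J, (f p).Dom ∧ ∀ t, (ev t p).isSome → ∀ q ∈ J, ∀ y ∈ f q, y ∈ ev t q := by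
  have hupper (q : α) : IsUpperSet {t | (ev t q).isSome} := fun t t' htt' ht => by
    obtain ⟨y, hy⟩ := Option.isSome_iff_exists.1 ht
    exact Option.isSome_iff_exists.2 ⟨y, hev.monotone q y htt' hy⟩
  obtain ⟨p, hp, hslow⟩ := exists_least_of_isUpperSet hupper
    (J := J.filter fun q => (f q).Dom) (Finset.filter_nonempty_iff.2 hJ)
  refine ⟨p, (Finset.mem_filter.1 hp).1, (Finset.mem_filter.1 hp).2, fun t ht q hq y hy => ?_⟩
  have hqt : (ev t q).isSome := hslow q (Finset.mem_filter.2 ⟨hq, Part.dom_iff_mem.2 ⟨y, hy⟩⟩) ht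
  obtain ⟨z, hz⟩ := Option.isSome_iff_exists.1 hqt
  exact Part.mem_unique ((hev.mem_iff q z).2 ⟨t, hz⟩) hy ▸ hz

section BinaryStrings

/-- The list of all binary strings of length at most `k`, as an explicit primitive recursive
function of `k`. -/
def stringsOfLengthLE : ℕ → List BStr
  | 0 => [[]]
  | k + 1 => [] :: ((stringsOfLengthLE k).map (false :: ·) ++ (stringsOfLengthLE k).map (true :: ·))

theorem mem_stringsOfLengthLE {k : ℕ} {s : BStr} : s ∈ stringsOfLengthLE k ↔ s.length ≤ k := by
  induction k generalizing s with
  | zero => simp [stringsOfLengthLE]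
  | succ k ih => rcases s with _ | ⟨_ | _, s⟩ <;> simp [stringsOfLengthLE, ih]

theorem length_stringsOfLengthLE_lt (k : ℕ) : (stringsOfLengthLE k).length < 2 ^ (k + 1) := by
  induction k with
  | zero => simp [stringsOfLengthLE]
  | succ k ih =>
    simp only [stringsOfLengthLE, List.length_cons, List.length_append, List.length_map]
    lia

theorem primrec_stringsOfLengthLE : Primrec stringsOfLengthLE := by
  have hcons (b : Bool) : Primrec fun p : ℕ × List BStr => p.2.map (b :: ·) :=
    Primrec.list_map Primrec.snd (Primrec.list_cons.comp (Primrec.const b) Primrec.snd)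
  have hstep : Primrec₂ fun (_ : ℕ) (l : List BStr) =>
      [] :: (l.map (false :: ·) ++ l.map (true :: ·)) :=
    Primrec.list_cons.comp (Primrec.const []) (Primrec.list_append.comp (hcons false) (hcons true))
  refine (Primrec.nat_rec₁ [[]] hstep).of_eq fun k => ?_
  induction k with
  | zero => rfl
  | succ k ih => simp only [stringsOfLengthLE, ← ih]

theorem exists_finset_strings_of_length (n : ℕ) :
    ∃ U : Finset BStr, U.card = 2 ^ n ∧ ∀ x ∈ U, x.length = n := by
  let vectors : Finset (List.Vector Bool n) := Finset.univ
  refine ⟨vectors.map ⟨_, List.Vector.toList_injective⟩, ?_, ?_⟩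
  · rw [Finset.card_map, Finset.card_univ, card_vector, Fintype.card_bool]
  · intro x hx
    obtain ⟨v, -, rfl⟩ := Finset.mem_map.1 hx
    exact v.toList_length

/-- The natural number whose binary digits, least significant first, are `u`; a left inverse of
`Nat.bits`. -/
def natOfBits (u : BStr) : ℕ := Nat.ofDigits 2 (u.map Bool.toNat)

theorem natOfBits_bits (n : ℕ) : natOfBits n.bits = n := by
  have hdigits : n.bits.map Bool.toNat = Nat.digits 2 n := (Nat.digits_two_eq_bits n).symm
  rw [natOfBits, hdigits, Nat.ofDigits_digits]

theorem primrec_natOfBits : Primrec natOfBits := by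
  have hstep : Primrec₂ fun (_ : BStr) (p : Bool × ℕ) => p.1.toNat + 2 * p.2 :=
    Primrec.nat_add.comp ((Primrec.dom_finite Bool.toNat).comp (Primrec.fst.comp Primrec.snd))
      (Primrec.nat_mul.comp (Primrec.const 2) (Primrec.snd.comp Primrec.snd))
  refine (Primrec.list_foldr Primrec.id (Primrec.const 0) hstep).of_eq fun u => ?_
  simp only [natOfBits, Nat.ofDigits_eq_foldr, List.foldr_map, id_eq, Nat.cast_id]

/-- Self-delimiting pairing: every bit of `u` is preceded by `true`, and `false` announces `p`. -/
def selfDelimitingPair (u p : BStr) : BStr := (u.flatMap fun b => [true, b]) ++ false :: p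

theorem length_selfDelimitingPair (u p : BStr) :
    (selfDelimitingPair u p).length = 2 * u.length + 1 + p.length := by
  simp only [selfDelimitingPair, List.length_append, List.length_flatMap, List.length_cons,
    List.length_nil, List.map_const', List.sum_replicate, smul_eq_mul]
  lia

theorem selfDelimitingPair_inj {u v p q : BStr} :
    selfDelimitingPair u p = selfDelimitingPair v q ↔ u = v ∧ p = q := by
  induction u generalizing v with
  | nil => cases v <;> simp [selfDelimitingPair]
  | cons a u ih =>
    cases v with
    | nil => simp [selfDelimitingPair]
    | cons b v => simpa [selfDelimitingPair, and_assoc] using fun _ : a = b => ih (v := v)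

theorem primrec_selfDelimitingPair : Primrec₂ selfDelimitingPair := by
  have hdouble : Primrec₂ fun (_ : BStr × BStr) (b : Bool) => [true, b] :=
    Primrec.list_cons.comp (Primrec.const true)
      (Primrec.list_cons.comp Primrec.snd (Primrec.const []))
  exact Primrec.list_append.comp (Primrec.list_flatMap Primrec.fst hdouble)
    (Primrec.list_cons.comp (Primrec.const false) Primrec.snd)

end BinaryStrings

theorem Cw_le_length {D : BStr →. BStr} {p x : BStr} (h : x ∈ D p) : Cw D x ≤ p.length :=
  iInf₂_le p h

namespace OptimalDM

variable {D : BStr →. BStr}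

theorem exists_C_le_of_partrec (hD : OptimalDM D) {D' : BStr →. BStr} (hD' : Partrec D') :
    ∃ c : ℕ, ∀ p, ∀ x ∈ D' p, C D x ≤ p.length + c := by
  obtain ⟨c, hc⟩ := hD.2 D' hD'
  refine ⟨c, fun p x hx => ENat.toNat_le_of_le_natCast ?_⟩
  calc Cw D x ≤ Cw D' x + c := hc x
    _ ≤ p.length + c := by gcongr; exact Cw_le_length hx
    _ = (p.length + c : ℕ) := by push_cast; rfl

theorem exists_C_le_of_partrec₂ (hD : OptimalDM D) {E : ℕ → BStr →. BStr} (hE : Partrec₂ E) :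
    ∃ c : ℕ, ∀ k p, ∀ x ∈ E k p, C D x ≤ p.length + 2 * k.size + c := by
  obtain ⟨split, hsplit, hsound, hdom⟩ := exists_partrec_section primrec_selfDelimitingPair.to_comp
  have hD' : Partrec fun w => (split w).bind fun a => E (natOfBits a.1) a.2 :=
    hsplit.bind (hE.comp (primrec_natOfBits.to_comp.comp (Computable.fst.comp Computable.snd))
      (Computable.snd.comp Computable.snd))
  obtain ⟨c, hc⟩ := hD.exists_C_le_of_partrec hD'
  refine ⟨c + 1, fun k p x hx => ?_⟩
  have hmem : (k.bits, p) ∈ split (selfDelimitingPair k.bits p) := by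
    obtain ⟨a, ha⟩ := Part.dom_iff_mem.1 (hdom (k.bits, p))
    obtain ⟨hu, hp⟩ := selfDelimitingPair_inj.1 (hsound _ _ ha)
    rwa [show a = (k.bits, p) from Prod.ext hu hp] at ha
  have hx' : x ∈ E (natOfBits k.bits) p := by rwa [natOfBits_bits]
  have hCx := hc _ x (Part.mem_bind hmem hx')
  rw [length_selfDelimitingPair, Nat.size_eq_bits_len] at hCx
  lia

theorem Cw_ne_top (hD : OptimalDM D) (x : BStr) : Cw D x ≠ ⊤ := by
  obtain ⟨c, hc⟩ := hD.2 (fun p => Part.some p) Computable.id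
  refine ne_top_of_le_ne_top (ENat.natCast_ne_top (x.length + c)) ?_
  calc Cw D x ≤ Cw (fun p => Part.some p) x + c := hc x
    _ ≤ x.length + c := by gcongr; exact Cw_le_length (Part.mem_some x)
    _ = (x.length + c : ℕ) := by push_cast; rfl

theorem exists_mem_of_C_le (hD : OptimalDM D) {x : BStr} {k : ℕ} (hx : C D x ≤ k) :
    ∃ p : BStr, p.length ≤ k ∧ x ∈ D p := by
  have hlt : Cw D x < (k + 1 : ℕ) := by
    rw [← ENat.natCast_toNat (hD.Cw_ne_top x)]
    exact_mod_cast Nat.lt_succ_of_le hx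
  obtain ⟨p, hxp, hp⟩ : ∃ p, ∃ _ : x ∈ D p, (p.length : ℕ∞) < (k + 1 : ℕ) := by
    simpa only [Cw, iInf_lt_iff] using hlt
  exact ⟨p, Nat.lt_succ_iff.1 (by exact_mod_cast hp), hxp⟩

end OptimalDM

theorem SetEncoding.exists_partrec_decode {enc : Finset BStr → BStr} (henc : SetEncoding enc) :
    ∃ dec : BStr →. List BStr, Partrec dec ∧ ∀ S, ∃ l ∈ dec (enc S), l.toFinset = S := by
  obtain ⟨dec, hdec, hsound, hdom⟩ := exists_partrec_section henc.2
  refine ⟨dec, hdec, fun S => ?_⟩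
  obtain ⟨l, hl⟩ := Part.dom_iff_mem.1 (hdom S.toList)
  rw [Finset.toList_toFinset] at hl
  exact ⟨l, hl, henc.1 (hsound _ _ hl)⟩

/-- `x` has length `n` and lies outside every set of fewer than `2 ^ (n - α - 1)` elements that a
program of length at most `α` prints within `t` steps of `ev`. The size bound is stated
multiplicatively to avoid truncated subtraction. -/
def AvoidsSmallSets (ev : ℕ → BStr → Option (List BStr)) (n α t : ℕ) (x : BStr) : Prop :=
  x.length = n ∧ ∀ q ∈ stringsOfLengthLE α, ∀ l ∈ ev t q, x ∈ l →
    2 ^ n ≤ 2 ^ (α + 1) * l.toFinset.card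

namespace AvoidsSmallSets

variable {ev : ℕ → BStr → Option (List BStr)}

theorem exists_string (ev : ℕ → BStr → Option (List BStr)) (n α t : ℕ) :
    ∃ x, AvoidsSmallSets ev n α t x := by
  obtain ⟨U, hUcard, hUlen⟩ := exists_finset_strings_of_length n
  have hU : U.Nonempty := Finset.card_pos.1 (hUcard ▸ Nat.two_pow_pos n)
  obtain ⟨x, hxU, hx⟩ := exists_mem_forall_card_le_card_mul_card hU (stringsOfLengthLE α).toFinset
    fun q => ((ev t q).getD []).toFinset
  have hprograms : (stringsOfLengthLE α).toFinset.card ≤ 2 ^ (α + 1) :=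
    (List.toFinset_card_le _).trans (length_stringsOfLengthLE_lt α).le
  refine ⟨x, hUlen x hxU, fun q hq l hl hxl => ?_⟩
  have hlarge := hx q (List.mem_toFinset.2 hq)
  simp only [Option.mem_def.1 hl, Option.getD_some, List.mem_toFinset, hUcard] at hlarge
  exact (hlarge hxl).trans (Nat.mul_le_mul_right _ hprograms)

theorem primrecPred (hev : Primrec₂ ev) :
    PrimrecPred fun a : (ℕ × ℕ) × ℕ × BStr => AvoidsSmallSets ev a.1.1 a.1.2 a.2.1 a.2.2 := by
  have hn : Primrec fun a : (ℕ × ℕ) × ℕ × BStr => a.1.1 := Primrec.fst.comp Primrec.fst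
  have hα : Primrec fun a : (ℕ × ℕ) × ℕ × BStr => a.1.2 := Primrec.snd.comp Primrec.fst
  have ht : Primrec fun a : (ℕ × ℕ) × ℕ × BStr => a.2.1 := Primrec.fst.comp Primrec.snd
  have hx : Primrec fun a : (ℕ × ℕ) × ℕ × BStr => a.2.2 := Primrec.snd.comp Primrec.snd
  have hpow : Primrec₂ fun m k : ℕ => m ^ k := Primrec₂.unpaired'.1 Nat.Primrec.pow
  have hlarge : PrimrecRel fun (l : List BStr) (a : (ℕ × ℕ) × ℕ × BStr) =>
      2 ^ a.1.1 ≤ 2 ^ (a.1.2 + 1) * l.toFinset.card :=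
    Primrec.nat_le.comp (hpow.comp (Primrec.const 2) (hn.comp Primrec.snd))
      (Primrec.nat_mul.comp
        (hpow.comp (Primrec.const 2) (Primrec.succ.comp (hα.comp Primrec.snd)))
        (primrec_list_toFinset_card.comp Primrec.fst))
  have hset : PrimrecRel fun (l : List BStr) (a : (ℕ × ℕ) × ℕ × BStr) =>
      a.2.2 ∈ l → 2 ^ a.1.1 ≤ 2 ^ (a.1.2 + 1) * l.toFinset.card :=
    ((primrecRel_list_mem.comp (hx.comp Primrec.snd) Primrec.fst).not.or hlarge).of_eq
      fun _ => imp_iff_not_or.symm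
  have hsets : Primrec fun a : (ℕ × ℕ) × ℕ × BStr =>
      (stringsOfLengthLE a.1.2).filterMap (ev a.2.1) :=
    Primrec.listFilterMap (primrec_stringsOfLengthLE.comp hα)
      (hev.comp (ht.comp Primrec.fst) Primrec.snd)
  refine ((Primrec.eq.comp (Primrec.list_length.comp hx) hn).and
    (hset.forall_mem_list.comp hsets Primrec.id)).of_eq fun a => ?_
  simp only [AvoidsSmallSets, List.mem_filterMap, id_eq, Option.mem_def]
  grind

theorem exists_partrec_search {f : BStr →. List BStr} (hev : IsStepEvaluator ev f) :
    ∃ E : ℕ → BStr →. BStr, Partrec₂ E ∧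
      (∀ n α p, ∀ x ∈ E (Nat.pair n α) p, ∃ t, (ev t p).isSome ∧ AvoidsSmallSets ev n α t x) ∧
      ∀ k p, (f p).Dom → (E k p).Dom := by
  let R (a : ℕ × BStr) (b : ℕ × BStr) : Prop :=
    (ev b.1 a.2).isSome ∧ AvoidsSmallSets ev a.1.unpair.1 a.1.unpair.2 b.1 b.2
  have hR : PrimrecPred fun c : (ℕ × BStr) × ℕ × BStr => R c.1 c.2 := by
    have hhalts : PrimrecPred fun c : (ℕ × BStr) × ℕ × BStr => (ev c.2.1 c.1.2).isSome :=
      Primrec.eq.comp (Primrec.option_isSome.comp (hev.primrec.comp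
        (Primrec.fst.comp Primrec.snd) (Primrec.snd.comp Primrec.fst))) (Primrec.const true)
    exact hhalts.and ((primrecPred hev.primrec).comp
      ((Primrec.unpair.comp (Primrec.fst.comp Primrec.fst)).pair Primrec.snd))
  obtain ⟨search, hsearch, hsound, hdom⟩ := exists_partrec_uniformization hR.computablePred
  refine ⟨fun k p => (search (k, p)).map Prod.snd,
    hsearch.map (Computable.snd.comp Computable.snd), fun n α p x hx => ?_, fun k p hp => ?_⟩
  · obtain ⟨⟨t, y⟩, hty, rfl⟩ := (Part.mem_map_iff _).1 hx
    obtain ⟨hhalt, havoid⟩ := hsound _ _ hty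
    rw [Nat.unpair_pair] at havoid
    exact ⟨t, hhalt, havoid⟩
  · obtain ⟨l, hl⟩ := Part.dom_iff_mem.1 hp
    obtain ⟨t, ht⟩ := (hev.mem_iff p l).1 hl
    obtain ⟨x, hx⟩ := exists_string ev k.unpair.1 k.unpair.2 t
    exact hdom (k, p) (t, x) ⟨Option.isSome_of_mem ht, hx⟩

end AvoidsSmallSets

theorem exists_simple_string_avoiding_small_sets {D : BStr →. BStr} (hD : OptimalDM D)
    {enc : Finset BStr → BStr} (henc : SetEncoding enc) :
    ∃ c : ℕ, ∀ n α : ℕ, (∃ S, C D (enc S) ≤ α) →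
      ∃ x : BStr, x.length = n ∧ C D x ≤ α + 2 * (Nat.pair n α).size + c ∧
        ∀ S : Finset BStr, x ∈ S → C D (enc S) ≤ α → 2 ^ n ≤ 2 ^ (α + 1) * S.card := by
  obtain ⟨dec, hdec, hdec_enc⟩ := henc.exists_partrec_decode
  have hF : Partrec fun q => (D q).bind dec := hD.1.bind (hdec.comp Computable.snd).to₂
  obtain ⟨ev, hev⟩ := exists_isStepEvaluator hF
  obtain ⟨E, hE, hsound, hdom⟩ := AvoidsSmallSets.exists_partrec_search hev
  obtain ⟨c, hc⟩ := hD.exists_C_le_of_partrec₂ hE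
  have hprogram {S : Finset BStr} {α : ℕ} (hS : C D (enc S) ≤ α) :
      ∃ q ∈ (stringsOfLengthLE α).toFinset, ∃ l ∈ (D q).bind dec, l.toFinset = S := by
    obtain ⟨q, hqα, hq⟩ := hD.exists_mem_of_C_le hS
    obtain ⟨l, hl, hlS⟩ := hdec_enc S
    exact ⟨q, List.mem_toFinset.2 (mem_stringsOfLengthLE.2 hqα), l, Part.mem_bind hq hl, hlS⟩
  refine ⟨c, fun n α ⟨S₀, hS₀⟩ => ?_⟩
  obtain ⟨q₀, hq₀α, l₀, hl₀, -⟩ := hprogram hS₀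
  obtain ⟨p, hpα, hp, hslow⟩ :=
    hev.exists_slowest ⟨q₀, hq₀α, Part.dom_iff_mem.2 ⟨l₀, hl₀⟩⟩
  obtain ⟨x, hx⟩ := Part.dom_iff_mem.1 (hdom (Nat.pair n α) p hp)
  obtain ⟨t, hpt, hlen, havoid⟩ := hsound n α p x hx
  have hCx := hc _ p x hx
  have hp_length : p.length ≤ α := mem_stringsOfLengthLE.1 (List.mem_toFinset.1 hpα)
  refine ⟨x, hlen, by lia, fun S hxS hS => ?_⟩
  obtain ⟨q, hqα, l, hl, rfl⟩ := hprogram hS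
  exact havoid q (List.mem_toFinset.1 hqα) l (hslow t hpt q hqα l hl) (List.mem_toFinset.1 hxS)

section LogBounds

theorem size_le_logb_add_one (m : ℕ) : (m.size : ℝ) ≤ Real.logb 2 (m + 1) + 1 := by
  rw [← sub_le_iff_le_add, Real.le_logb_iff_rpow_le one_lt_two (by positivity),
    Real.rpow_sub_one two_ne_zero, Real.rpow_natCast, div_le_iff₀ two_pos]
  have hpow : 2 ^ m.size ≤ (m + 1) * 2 := by
    rcases hk : m.size with _ | k
    · lia
    · have : 2 ^ k ≤ m := Nat.lt_size.1 (hk ▸ k.lt_succ_self)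
      lia
  exact_mod_cast hpow

theorem size_pair_le_logb {n α : ℕ} (hα : α ≤ n) :
    ((Nat.pair n α).size : ℝ) ≤ 2 * Real.logb 2 (n + 2) + 1 := by
  have hpair : Nat.pair n α + 1 ≤ (n + 2) ^ 2 := by
    have := Nat.pair_lt_max_add_one_sq n α
    rw [max_eq_left hα] at this
    nlinarith
  calc ((Nat.pair n α).size : ℝ) ≤ Real.logb 2 (Nat.pair n α + 1) + 1 := size_le_logb_add_one _
    _ ≤ Real.logb 2 ((n + 2) ^ 2) + 1 := by
        gcongr
        · exact one_lt_two
        · exact_mod_cast hpair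
    _ = 2 * Real.logb 2 (n + 2) + 1 := by rw [Real.logb_pow, Nat.cast_ofNat]

theorem le_add_logb_of_two_pow_le {n k m : ℕ} (h : 2 ^ n ≤ 2 ^ k * m) :
    (n : ℝ) ≤ k + Real.logb 2 m := by
  have hm : m ≠ 0 := by rintro rfl; simp at h
  have hlog : Real.logb 2 (2 ^ n) ≤ Real.logb 2 (2 ^ k * m) :=
    Real.logb_le_logb_of_le one_lt_two (by positivity) (by exact_mod_cast h)
  rwa [Real.logb_mul (by positivity) (by exact_mod_cast hm), Real.logb_pow, Real.logb_pow,
    Real.logb_self_eq_one one_lt_two, mul_one, mul_one] at hlog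

end LogBounds

/-- **Existence of non-stochastic objects.** -/
theorem stmt5 (D : BStr →. BStr) (hD : OptimalDM D)
    (enc : Finset BStr → BStr) (henc : SetEncoding enc) :
    ∃ c : ℝ, ∀ n α β : ℕ,
      2 * (α : ℝ) + (β : ℝ) < (n : ℝ) - c * Real.logb 2 ((n : ℝ) + 2) →
      ∃ x : BStr, x.length = n ∧ ¬ Stochastic D enc α β x := by
  obtain ⟨c, hc⟩ := exists_simple_string_avoiding_small_sets hD henc
  -- `n` and `α` cost `4 log (n + 2) + 2` bits, and one more bit is lost in the size of `S`.
  refine ⟨c + 7, fun n α β hlt => ?_⟩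
  have hlog : 1 ≤ Real.logb 2 ((n : ℝ) + 2) := by
    rw [Real.le_logb_iff_rpow_le one_lt_two (by positivity), Real.rpow_one]
    exact le_add_of_nonneg_left n.cast_nonneg
  have hc_log : (c : ℝ) ≤ c * Real.logb 2 ((n : ℝ) + 2) := le_mul_of_one_le_right c.cast_nonneg hlog
  have hαn : (α : ℝ) ≤ n := by
    linarith [α.cast_nonneg (α := ℝ), β.cast_nonneg (α := ℝ), c.cast_nonneg (α := ℝ)]
  by_contra! hstoch
  obtain ⟨S₀, -, hS₀, -⟩ := hstoch (List.replicate n false) List.length_replicate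
  obtain ⟨x, hxn, hCx, hlarge⟩ := hc n α ⟨S₀, hS₀⟩
  obtain ⟨S, hxS, hS, hdeficiency⟩ := hstoch x hxn
  have hcard := le_add_logb_of_two_pow_le (hlarge S hxS hS)
  have hsize := size_pair_le_logb (Nat.cast_le.1 hαn)
  have hCx' : (C D x : ℝ) ≤ α + 2 * (Nat.pair n α).size + c := by exact_mod_cast hCx
  push_cast at hcard
  linarith
end
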